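/- arXiv:2109.05758 — 2 statements merged into one kernel-verified Lean document; each statement's English description precedes it below -/
import Mathlib

section
/- Let p ∈ (0,1) be fixed with p > 1 − 1/∛7. Then with high probability sat(G(n,p), C_4) ≤ (3(1+(1−p)³)/(2(1−(1−p)³)))·n·(1+o(1)). -/
open MeasureTheory Filter Real

/-- The index type of potential edges of a graph on `Fin n`. -/
abbrev EdgeType (n : ℕ) := {e : Sym2 (Fin n) // ¬ e.IsDiag}

/-- The product Bernoulli measure on edge-indicator functions: the binomial
random graph `G(n,p)`. -/
noncomputable def erMeasure (n : ℕ) (p : ℝ) : Measure (EdgeType n → Bool) :=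
  Measure.pi fun _ => (PMF.bernoulli (min (Real.toNNReal p) 1) (min_le_right _ _)).toMeasure

/-- The simple graph determined by an edge-indicator function. -/
def graphOf {n : ℕ} (ω : EdgeType n → Bool) : SimpleGraph (Fin n) :=
  SimpleGraph.fromEdgeSet {e | ∃ h : ¬ e.IsDiag, ω ⟨e, h⟩ = true}

/-- `H` contains a (not necessarily induced) copy of `F`. -/
def ContainsCopy {α β : Type*} (F : SimpleGraph α) (H : SimpleGraph β) : Prop :=
  ∃ f : α → β, Function.Injective f ∧ ∀ ⦃a b⦄, F.Adj a b → H.Adj (f a) (f b)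

/-- `H` is `F`-saturated in `G`: `H` is a spanning subgraph of `G` that is `F`-free,
and adding any edge of `G` missing from `H` creates a copy of `F`. -/
def IsSaturatedIn {V : Type*} {α : Type*} (G H : SimpleGraph V) (F : SimpleGraph α) : Prop :=
  H ≤ G ∧ ¬ ContainsCopy F H ∧
    ∀ v w : V, G.Adj v w → ¬ H.Adj v w →
      ContainsCopy F (H ⊔ SimpleGraph.fromEdgeSet {s(v, w)})

/-- The saturation number `sat(G,F)`: the minimum number of edges of an
`F`-saturated spanning subgraph of `G`. -/
noncomputable def satNum {V α : Type*} (G : SimpleGraph V) (F : SimpleGraph α) : ℕ :=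
  sInf {k | ∃ H : SimpleGraph V, IsSaturatedIn G H F ∧ H.edgeSet.ncard = k}

/-- The cycle `C_m`, as a graph on `ZMod m`. -/
def cycGraph (m : ℕ) : SimpleGraph (ZMod m) :=
  SimpleGraph.fromRel (fun a b => a = b + 1)


/-! ### Four-cycles and relative saturation -/

/-- `H` has no four-cycle, in explicit form. -/
def C4Free {V : Type*} (H : SimpleGraph V) : Prop :=
  ∀ u x v y, H.Adj u x → H.Adj x v → H.Adj v y → H.Adj y u → u = v ∨ x = y

/-- There is a path with three edges between `u` and `v`. -/
def Path3 {V : Type*} (H : SimpleGraph V) (u v : V) : Prop :=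
  ∃ x y, H.Adj u x ∧ H.Adj x y ∧ H.Adj y v ∧ u ≠ y ∧ x ≠ v

theorem Path3.symm {V : Type*} {H : SimpleGraph V} {u v : V} (h : Path3 H u v) :
    Path3 H v u := by
  obtain ⟨x, y, h1, h2, h3, h4, h5⟩ := h
  exact ⟨y, x, h3.symm, h2.symm, h1.symm, h5.symm, h4.symm⟩

/-- `H` is a `C_4`-saturated subgraph of `G[S]`. -/
structure SatOn {V : Type*} (G : SimpleGraph V) (S : Finset V) (H : SimpleGraph V) : Prop where
  le : H ≤ G
  supp : ∀ u v, H.Adj u v → u ∈ S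
  free : C4Free H
  sat : ∀ u v, u ∈ S → v ∈ S → G.Adj u v → ¬ H.Adj u v → Path3 H u v

theorem cyc4_adj (a b : ZMod 4) : (cycGraph 4).Adj a b ↔ (a = b + 1 ∨ b = a + 1) := by
  unfold cycGraph
  rw [SimpleGraph.fromRel_adj]
  revert a b
  decide

theorem containsCopy_c4 {V : Type*} (H : SimpleGraph V) :
    ContainsCopy (cycGraph 4) H ↔
      ∃ u x v y, H.Adj u x ∧ H.Adj x v ∧ H.Adj v y ∧ H.Adj y u ∧ u ≠ v ∧ x ≠ y := by
  constructor
  · rintro ⟨f, hf, h⟩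
    refine ⟨f 0, f 1, f 2, f 3, h ?_, h ?_, h ?_, h ?_, hf.ne ?_, hf.ne ?_⟩
    all_goals first | (rw [cyc4_adj]; decide) | decide
  · rintro ⟨u, x, v, y, h1, h2, h3, h4, h5, h6⟩
    have e1 := h1.ne
    have e2 := h2.ne
    have e3 := h3.ne
    have e4 := h4.ne
    let f : Fin 4 → V := ![u, x, v, y]
    refine ⟨f, ?_, ?_⟩
    · intro a b hab
      change Fin 4 at a b
      fin_cases a <;> fin_cases b <;> simp_all [f] <;> rfl
    · intro a b hab
      rw [cyc4_adj] at hab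
      change Fin 4 at a b
      have : ∀ a b : Fin 4, (a = b + 1 ∨ b = a + 1) → H.Adj (f a) (f b) := by
        intro a b
        fin_cases a <;> fin_cases b <;> simp [f, h1, h2, h3, h4, h1.symm, h2.symm, h3.symm, h4.symm]
      exact this a b hab

theorem satNum_le {V : Type*} [Fintype V] (G H : SimpleGraph V)
    (h : SatOn G Finset.univ H) : satNum G (cycGraph 4) ≤ H.edgeSet.ncard := by
  refine Nat.sInf_le ⟨H, ⟨h.le, ?_, ?_⟩, rfl⟩
  · rw [containsCopy_c4]
    rintro ⟨u, x, v, y, h1, h2, h3, h4, h5, h6⟩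
    rcases h.free u x v y h1 h2 h3 h4 with e | e
    · exact h5 e
    · exact h6 e
  · intro v w hg hn
    rw [containsCopy_c4]
    obtain ⟨x, y, h1, h2, h3, h4, h5⟩ := h.sat v w (Finset.mem_univ _) (Finset.mem_univ _) hg hn
    refine ⟨v, x, y, w, Or.inl h1, Or.inl h2, Or.inl h3, Or.inr ?_, h4, h5⟩
    simp [hg.ne', Sym2.eq_swap]

theorem exists_satOn {V : Type*} [Fintype V] [DecidableEq V] (G : SimpleGraph V) (S : Finset V) :
    ∃ H, SatOn G S H ∧ H.edgeSet.ncard ≤ S.card ^ 2 := by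
  classical
  obtain ⟨H, hH⟩ := (Set.toFinite {H : SimpleGraph V | H ≤ G ∧
    (∀ u v, H.Adj u v → u ∈ S) ∧ C4Free H}).exists_maximal
      ⟨⊥, bot_le, by simp, by intro u x v y h; simp at h⟩
  obtain ⟨⟨h1, h2, h3⟩, hmax⟩ := hH
  refine ⟨H, ⟨h1, h2, h3, ?_⟩, ?_⟩
  · intro u v hu hv hg hn
    by_contra hp
    have hadj : ∀ a b, (H ⊔ SimpleGraph.fromEdgeSet {s(u, v)}).Adj a b ↔
        (H.Adj a b ∨ (a = u ∧ b = v) ∨ (a = v ∧ b = u)) := by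
      intro a b
      have := hg.ne
      simp only [SimpleGraph.sup_adj, SimpleGraph.fromEdgeSet_adj, Set.mem_singleton_iff,
        Sym2.eq_iff]
      grind
    have hle : H ⊔ SimpleGraph.fromEdgeSet {s(u, v)} ≤ H := by
      apply hmax _ le_sup_left
      refine ⟨?_, ?_, ?_⟩
      · intro a b hab
        rw [hadj] at hab
        rcases hab with h | ⟨rfl, rfl⟩ | ⟨rfl, rfl⟩
        · exact h1 h
        · exact hg
        · exact hg.symm
      · intro a b hab
        rw [hadj] at hab
        rcases hab with h | ⟨rfl, rfl⟩ | ⟨rfl, rfl⟩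
        · exact h2 _ _ h
        · exact hu
        · exact hv
      · intro a x b y e1 e2 e3 e4
        rw [hadj] at e1 e2 e3 e4
        by_contra hne
        push Not at hne
        obtain ⟨n1, n2⟩ := hne
        have key : ∀ a x b y, a ≠ b → x ≠ y → (H.Adj a x ∨ (a = u ∧ x = v) ∨ (a = v ∧ x = u)) →
            (H.Adj x b ∨ (x = u ∧ b = v) ∨ (x = v ∧ b = u)) →
            (H.Adj b y ∨ (b = u ∧ y = v) ∨ (b = v ∧ y = u)) →
            ((y = u ∧ a = v) ∨ (y = v ∧ a = u)) → False := by
          intro a x b y n1 n2 e1 e2 e3 e4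
          have p1 : H.Adj a x := by grind
          have q1 := p1.ne
          have p2 : H.Adj x b := by grind
          have q2 := p2.ne
          have p3 : H.Adj b y := by grind
          rcases e4 with ⟨rfl, rfl⟩ | ⟨rfl, rfl⟩
          · exact hp (Path3.symm ⟨x, b, p1, p2, p3, n1, n2⟩)
          · exact hp ⟨x, b, p1, p2, p3, n1, n2⟩
        rcases e4 with p4 | e4
        · rcases e3 with p3 | e3
          · rcases e2 with p2 | e2
            · rcases e1 with p1 | e1
              · rcases h3 a x b y p1 p2 p3 p4 with h | h
                · exact n1 h
                · exact n2 h
              · exact key x b y a n2 n1.symm (Or.inl p2) (Or.inl p3) (Or.inl p4) e1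
            · exact key b y a x n1.symm n2.symm (Or.inl p3) (Or.inl p4) e1 e2
          · exact key y a x b n2.symm n1 (Or.inl p4) e1 e2 e3
        · exact key a x b y n1 n2 e1 e2 e3 e4
    exact hn (hle ((hadj u v).2 (Or.inr (Or.inl ⟨rfl, rfl⟩))))
  · have hsub : H.edgeSet ⊆ ((S ×ˢ S).image (fun z => s(z.1, z.2)) : Finset (Sym2 V)) := by
      intro e he
      induction e with
      | _ a b =>
        rw [SimpleGraph.mem_edgeSet] at he
        simp only [Finset.coe_image, Set.mem_image]
        exact ⟨(a, b), by simpa using ⟨h2 _ _ he, h2 _ _ he.symm⟩, rfl⟩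
    calc H.edgeSet.ncard ≤ _ := Set.ncard_le_ncard hsub (Finset.finite_toSet _)
      _ = _ := Set.ncard_coe_finset _
      _ ≤ _ := Finset.card_image_le
      _ = _ := by rw [Finset.card_product, sq]

/-! ### One level of the construction -/

/-- The data of one level: three centres `a`, classes `c` of the vertices in `L`, a maximal
matching `σ` inside the classes, and the attachment maps `f` of the vertices in `R`. -/
structure Level {V : Type*} (G : SimpleGraph V) (S R L : Finset V) (a : Fin 3 → V)
    (c : V → Fin 3) (σ : V → V) (f : Fin 3 → V → V) : Prop where
  hS : ∀ v, v ∈ S ↔ (v ∈ R ∨ v ∈ L ∨ ∃ i, v = a i)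
  aR : ∀ i, a i ∉ R
  aL : ∀ i, a i ∉ L
  RL : ∀ v, v ∈ R → v ∉ L
  aa : ∀ i j, i ≠ j → G.Adj (a i) (a j)
  cL : ∀ x, x ∈ L → G.Adj x (a (c x))
  σσ : ∀ x, σ (σ x) = x
  σL : ∀ x, x ∈ L → σ x ∈ L
  σc : ∀ x, x ∈ L → c (σ x) = c x
  σG : ∀ x, x ∈ L → σ x = x ∨ G.Adj x (σ x)
  σmax : ∀ x y, x ∈ L → y ∈ L → c x = c y → σ x = x → σ y = y → ¬ G.Adj x y
  fL : ∀ i y, y ∈ R → f i y ∈ L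
  fc : ∀ i y, y ∈ R → c (f i y) = i
  fG : ∀ i y, y ∈ R → G.Adj y (f i y)
  finj : ∀ i y z, y ∈ R → z ∈ R → f i y = f i z → y = z
  fσ : ∀ i y z, y ∈ R → z ∈ R → σ (f i y) = f i z → y = z

/-- The graph built on one level from the graph `H'` on the remaining vertices. -/
def stepGraph {V : Type*} (R L : Finset V) (a : Fin 3 → V)
    (c : V → Fin 3) (σ : V → V) (f : Fin 3 → V → V) (H' : SimpleGraph V) : SimpleGraph V :=
  SimpleGraph.fromRel (fun u v => H'.Adj u v ∨ (∃ i j, u = a i ∧ v = a j) ∨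
    (u ∈ L ∧ v = a (c u)) ∨ (u ∈ L ∧ v = σ u) ∨ (u ∈ R ∧ ∃ i, v = f i u))

section Level

variable {V : Type*} {G H' : SimpleGraph V} {S R L : Finset V} {a : Fin 3 → V}
    {c : V → Fin 3} {σ : V → V} {f : Fin 3 → V → V}

theorem Level.ainj (h : Level G S R L a c σ f) (i j : Fin 3) (e : a i = a j) : i = j := by
  by_contra hne
  exact (h.aa i j hne).ne e

theorem Level.adj_a (h : Level G S R L a c σ f) (hH : SatOn G R H') {i : Fin 3} {v : V}
    (hv : (stepGraph R L a c σ f H').Adj (a i) v) :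
    (∃ j, j ≠ i ∧ v = a j) ∨ (v ∈ L ∧ c v = i) := by
  rw [stepGraph, SimpleGraph.fromRel_adj] at hv
  obtain ⟨hne, hv⟩ := hv
  rcases hv with (hv | ⟨j, k, -, rfl⟩ | ⟨hv, -⟩ | ⟨hv, -⟩ | ⟨hv, -⟩) |
    (hv | ⟨j, k, rfl, -⟩ | ⟨hv, e⟩ | ⟨hv, e⟩ | ⟨hv, k, e⟩)
  · exact absurd (hH.supp _ _ hv) (h.aR i)
  · left; exact ⟨k, fun e => hne (by rw [e]), rfl⟩
  · exact absurd hv (h.aL i)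
  · exact absurd hv (h.aL i)
  · exact absurd hv (h.aR i)
  · exact absurd (hH.supp _ _ hv.symm) (h.aR i)
  · left; exact ⟨j, fun e => hne (by rw [e]), rfl⟩
  · right; exact ⟨hv, (h.ainj _ _ e).symm⟩
  · exact absurd (e ▸ h.σL _ hv) (h.aL i)
  · exact absurd (e ▸ h.fL k _ hv) (h.aL i)

theorem Level.adj_L (h : Level G S R L a c σ f) (hH : SatOn G R H') {x : V} (hx : x ∈ L) {v : V}
    (hv : (stepGraph R L a c σ f H').Adj x v) :
    v = a (c x) ∨ (v = σ x ∧ v ∈ L ∧ c v = c x) ∨ (v ∈ R ∧ f (c x) v = x) := by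
  rw [stepGraph, SimpleGraph.fromRel_adj] at hv
  obtain ⟨hne, hv⟩ := hv
  rcases hv with (hv | ⟨j, k, rfl, rfl⟩ | ⟨hv, e⟩ | ⟨hv, e⟩ | ⟨hv, -⟩) |
    (hv | ⟨j, k, rfl, rfl⟩ | ⟨hv, rfl⟩ | ⟨hv, rfl⟩ | ⟨hv, k, rfl⟩)
  · exact absurd hx (h.RL _ (hH.supp _ _ hv))
  · exact absurd hx (h.aL j)
  · exact Or.inl e
  · right; left; exact ⟨e, e ▸ h.σL _ hx, e ▸ h.σc _ hx⟩
  · exact absurd hx (h.RL _ hv)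
  · exact absurd hx (h.RL _ (hH.supp _ _ hv.symm))
  · exact absurd hx (h.aL _)
  · exact absurd hx (h.aL _)
  · right; left; exact ⟨(h.σσ v).symm, hv, (h.σc v hv).symm⟩
  · right; right; exact ⟨hv, by rw [h.fc _ _ hv]⟩

theorem Level.adj_R (h : Level G S R L a c σ f) (hH : SatOn G R H') {y : V} (hy : y ∈ R) {v : V}
    (hv : (stepGraph R L a c σ f H').Adj y v) :
    (v ∈ R ∧ H'.Adj y v) ∨ (v ∈ L ∧ ∃ i, v = f i y) := by
  rw [stepGraph, SimpleGraph.fromRel_adj] at hv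
  obtain ⟨hne, hv⟩ := hv
  rcases hv with (hv | ⟨j, k, rfl, rfl⟩ | ⟨hv, e⟩ | ⟨hv, e⟩ | ⟨hv, k, rfl⟩) |
    (hv | ⟨j, k, rfl, rfl⟩ | ⟨hv, rfl⟩ | ⟨hv, rfl⟩ | ⟨hv, k, rfl⟩)
  · exact Or.inl ⟨hH.supp _ _ hv.symm, hv⟩
  · exact absurd hy (h.aR j)
  · exact absurd hv (h.RL _ hy)
  · exact absurd hv (h.RL _ hy)
  · exact Or.inr ⟨h.fL k _ hy, k, rfl⟩
  · exact Or.inl ⟨hH.supp _ _ hv, hv.symm⟩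
  · exact absurd hy (h.aR _)
  · exact absurd hy (h.aR _)
  · exact absurd (h.σL _ hv) (h.RL _ hy)
  · exact absurd (h.fL k _ hv) (h.RL _ hy)

theorem Level.free_a (h : Level G S R L a c σ f) (hH : SatOn G R H') {i : Fin 3} {x v y : V}
    (h1 : (stepGraph R L a c σ f H').Adj (a i) x) (h2 : (stepGraph R L a c σ f H').Adj x v)
    (h3 : (stepGraph R L a c σ f H').Adj v y) (h4 : (stepGraph R L a c σ f H').Adj y (a i)) :
    a i = v ∨ x = y := by
  have key : ∀ x y, x ∈ L → c x = i → (∃ j, j ≠ i ∧ y = a j) →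
      (stepGraph R L a c σ f H').Adj x v → (stepGraph R L a c σ f H').Adj y v → a i = v := by
    rintro x y hx hc ⟨j, hj, rfl⟩ hxv hyv
    rcases h.adj_L hH hx hxv with rfl | ⟨e, hv, hcv⟩ | ⟨hv, e⟩
    · rw [hc]
    · rcases h.adj_a hH hyv with ⟨k, -, rfl⟩ | ⟨-, hk⟩
      · exact absurd hv (h.aL _)
      · exact absurd (hk.symm.trans (hcv.trans hc)) hj
    · rcases h.adj_a hH hyv with ⟨k, -, rfl⟩ | ⟨hk, -⟩
      · exact absurd hv (h.aR _)
      · exact absurd hk (h.RL _ hv)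
  rcases h.adj_a hH h1 with ⟨j, hj, rfl⟩ | ⟨hx, hcx⟩
  · rcases h.adj_a hH h4.symm with ⟨k, hk, rfl⟩ | ⟨hy, hcy⟩
    · by_cases hjk : j = k
      · right; rw [hjk]
      left
      rcases h.adj_a hH h2 with ⟨l, hl, rfl⟩ | ⟨hv, hcv⟩
      · rcases h.adj_a hH h3.symm with ⟨m, hm, e⟩ | ⟨hv, hcv⟩
        · have := h.ainj _ _ e
          have : i = l := by omega
          rw [this]
        · exact absurd hv (h.aL _)
      · rcases h.adj_a hH h3.symm with ⟨m, hm, rfl⟩ | ⟨hv', hcv'⟩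
        · exact absurd hv (h.aL _)
        · exact absurd (hcv.symm.trans hcv') hjk
    · left; exact key y _ hy hcy ⟨j, hj, rfl⟩ h3.symm h2
  · rcases h.adj_a hH h4.symm with ⟨k, hk, rfl⟩ | ⟨hy, hcy⟩
    · left; exact key x _ hx hcx ⟨k, hk, rfl⟩ h2 h3.symm
    · rcases h.adj_L hH hx h2 with rfl | ⟨e, hv, hcv⟩ | ⟨hv, e⟩
      · left; rw [hcx]
      · rcases h.adj_L hH hy h3.symm with rfl | ⟨e', hv', hcv'⟩ | ⟨hv', e'⟩
        · exact absurd hv (h.aL _)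
        · right
          rw [← h.σσ x, ← e, e', h.σσ]
        · exact absurd hv (h.RL _ hv')
      · rcases h.adj_L hH hy h3.symm with rfl | ⟨e', hv', hcv'⟩ | ⟨hv', e'⟩
        · exact absurd hv (h.aR _)
        · exact absurd hv' (h.RL _ hv)
        · right; rw [← e, ← e', hcx, hcy]

theorem Level.free_L (h : Level G S R L a c σ f) (hH : SatOn G R H') {u x v y : V}
    (hu : u ∈ L) (nx : ∀ i, x ≠ a i) (nv : ∀ i, v ≠ a i) (ny : ∀ i, y ≠ a i)
    (h1 : (stepGraph R L a c σ f H').Adj u x) (h2 : (stepGraph R L a c σ f H').Adj x v)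
    (h3 : (stepGraph R L a c σ f H').Adj v y) (h4 : (stepGraph R L a c σ f H').Adj y u) :
    u = v ∨ x = y := by
  have key : ∀ x y, x = σ u → x ∈ L → c x = c u → y ∈ R → f (c u) y = u →
      (stepGraph R L a c σ f H').Adj x v → (stepGraph R L a c σ f H').Adj y v → u = v := by
    intro x y hx hxL hcx hy hfy hxv hyv
    rcases h.adj_L hH hxL hxv with e | ⟨e, -, -⟩ | ⟨hv, e⟩
    · exact absurd e (nv _)
    · rw [e, hx, h.σσ]
    · exfalso
      have : y = v := by
        apply h.fσ (c u) y v hy hv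
        rw [hfy, ← hx, ← hcx, e]
      exact hyv.ne this
  rcases h.adj_L hH hu h1 with e | ⟨e, hx, hcx⟩ | ⟨hx, e⟩
  · exact absurd e (nx _)
  · rcases h.adj_L hH hu h4.symm with e' | ⟨e', hy, hcy⟩ | ⟨hy, e'⟩
    · exact absurd e' (ny _)
    · right; rw [e, e']
    · left; exact key x y e hx hcx hy e' h2 h3.symm
  · rcases h.adj_L hH hu h4.symm with e' | ⟨e', hy, hcy⟩ | ⟨hy, e'⟩
    · exact absurd e' (ny _)
    · left; exact key y x e' hy hcy hx e h3.symm h2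
    · right; exact h.finj (c u) x y hx hy (e.trans e'.symm)

theorem Level.mem (h : Level G S R L a c σ f) (hH : SatOn G R H') {u v : V}
    (huv : (stepGraph R L a c σ f H').Adj u v) : u ∈ R ∨ u ∈ L ∨ ∃ i, u = a i := by
  rw [stepGraph, SimpleGraph.fromRel_adj] at huv
  obtain ⟨hne, hv⟩ := huv
  rcases hv with (hv | ⟨j, k, rfl, rfl⟩ | ⟨hv, e⟩ | ⟨hv, e⟩ | ⟨hv, k, rfl⟩) |
    (hv | ⟨j, k, rfl, rfl⟩ | ⟨hv, rfl⟩ | ⟨hv, rfl⟩ | ⟨hv, k, rfl⟩)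
  · exact Or.inl (hH.supp _ _ hv)
  · exact Or.inr (Or.inr ⟨_, rfl⟩)
  · exact Or.inr (Or.inl hv)
  · exact Or.inr (Or.inl hv)
  · exact Or.inl hv
  · exact Or.inl (hH.supp _ _ hv.symm)
  · exact Or.inr (Or.inr ⟨_, rfl⟩)
  · exact Or.inr (Or.inr ⟨_, rfl⟩)
  · exact Or.inr (Or.inl (h.σL _ hv))
  · exact Or.inr (Or.inl (h.fL k _ hv))

theorem Level.free (h : Level G S R L a c σ f) (hH : SatOn G R H') :
    C4Free (stepGraph R L a c σ f H') := by
  intro u x v y h1 h2 h3 h4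
  by_cases nu : ∃ i, u = a i
  · obtain ⟨i, rfl⟩ := nu
    exact h.free_a hH h1 h2 h3 h4
  by_cases nx : ∃ i, x = a i
  · obtain ⟨i, rfl⟩ := nx
    exact (h.free_a hH h2 h3 h4 h1).symm.imp Eq.symm id
  by_cases nv : ∃ i, v = a i
  · obtain ⟨i, rfl⟩ := nv
    exact (h.free_a hH h3 h4 h1 h2).imp Eq.symm Eq.symm
  by_cases ny : ∃ i, y = a i
  · obtain ⟨i, rfl⟩ := ny
    exact (h.free_a hH h4 h1 h2 h3).symm.imp id Eq.symm
  push Not at nu nx nv ny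
  by_cases lu : u ∈ L
  · exact h.free_L hH lu nx nv ny h1 h2 h3 h4
  by_cases lx : x ∈ L
  · exact (h.free_L hH lx nv ny nu h2 h3 h4 h1).symm.imp Eq.symm id
  by_cases lv : v ∈ L
  · exact (h.free_L hH lv ny nu nx h3 h4 h1 h2).imp Eq.symm Eq.symm
  by_cases ly : y ∈ L
  · exact (h.free_L hH ly nu nx nv h4 h1 h2 h3).symm.imp id Eq.symm
  have hu : u ∈ R := by
    rcases h.mem hH h1 with e | e | ⟨i, e⟩
    · exact e
    · exact absurd e lu
    · exact absurd e (nu i)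
  have hv : v ∈ R := by
    rcases h.mem hH h3 with e | e | ⟨i, e⟩
    · exact e
    · exact absurd e lv
    · exact absurd e (nv i)
  have g1 : H'.Adj u x := by
    rcases h.adj_R hH hu h1 with e | e
    · exact e.2
    · exact absurd e.1 lx
  have g2 : H'.Adj v x := by
    rcases h.adj_R hH hv h2.symm with e | e
    · exact e.2
    · exact absurd e.1 lx
  have g3 : H'.Adj v y := by
    rcases h.adj_R hH hv h3 with e | e
    · exact e.2
    · exact absurd e.1 ly
  have g4 : H'.Adj u y := by
    rcases h.adj_R hH hu h4.symm with e | e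
    · exact e.2
    · exact absurd e.1 ly
  exact hH.free u x v y g1 g2.symm g3 g4.symm

theorem Level.eaa (h : Level G S R L a c σ f) {i j : Fin 3} (hij : i ≠ j) :
    (stepGraph R L a c σ f H').Adj (a i) (a j) := by
  rw [stepGraph, SimpleGraph.fromRel_adj]
  exact ⟨(h.aa i j hij).ne, Or.inl (Or.inr (Or.inl ⟨i, j, rfl, rfl⟩))⟩

theorem Level.eLa (h : Level G S R L a c σ f) {x : V} (hx : x ∈ L) :
    (stepGraph R L a c σ f H').Adj x (a (c x)) := by
  rw [stepGraph, SimpleGraph.fromRel_adj]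
  exact ⟨(h.cL x hx).ne, Or.inl (Or.inr (Or.inr (Or.inl ⟨hx, rfl⟩)))⟩

theorem Level.eσ (_h : Level G S R L a c σ f) {x : V} (hx : x ∈ L) (hne : σ x ≠ x) :
    (stepGraph R L a c σ f H').Adj x (σ x) := by
  rw [stepGraph, SimpleGraph.fromRel_adj]
  exact ⟨hne.symm, Or.inl (Or.inr (Or.inr (Or.inr (Or.inl ⟨hx, rfl⟩))))⟩

theorem Level.ef (h : Level G S R L a c σ f) {y : V} (hy : y ∈ R) (i : Fin 3) :
    (stepGraph R L a c σ f H').Adj y (f i y) := by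
  rw [stepGraph, SimpleGraph.fromRel_adj]
  exact ⟨(h.fG i y hy).ne, Or.inl (Or.inr (Or.inr (Or.inr (Or.inr ⟨hy, i, rfl⟩))))⟩

theorem Level.sat (h : Level G S R L a c σ f) (hH : SatOn G R H') :
    SatOn G S (stepGraph R L a c σ f H') := by
  refine ⟨?_, ?_, h.free hH, ?_⟩
  · intro u v huv
    rw [stepGraph, SimpleGraph.fromRel_adj] at huv
    have key : ∀ u v, u ≠ v → (H'.Adj u v ∨ (∃ i j, u = a i ∧ v = a j) ∨
        (u ∈ L ∧ v = a (c u)) ∨ (u ∈ L ∧ v = σ u) ∨ (u ∈ R ∧ ∃ i, v = f i u)) → G.Adj u v := by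
      rintro u v hne (hv | ⟨j, k, rfl, rfl⟩ | ⟨hv, rfl⟩ | ⟨hv, rfl⟩ | ⟨hv, k, rfl⟩)
      · exact hH.le hv
      · exact h.aa j k (fun e => hne (by rw [e]))
      · exact h.cL u hv
      · exact (h.σG u hv).resolve_left hne.symm
      · exact h.fG k u hv
    rcases huv with ⟨hne, hv | hv⟩
    · exact key u v hne hv
    · exact (key v u hne.symm hv).symm
  · intro u v huv
    exact (h.hS u).2 (h.mem hH huv)
  · have third : ∀ i j : Fin 3, ∃ k, k ≠ i ∧ k ≠ j := by decide
    -- centre versus `L`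
    have paL : ∀ i x, x ∈ L → ¬ (stepGraph R L a c σ f H').Adj (a i) x →
        Path3 (stepGraph R L a c σ f H') x (a i) := by
      intro i x hx hn
      have hci : c x ≠ i := by
        rintro rfl
        exact hn (h.eLa hx).symm
      obtain ⟨k, k1, k2⟩ := third (c x) i
      refine ⟨a (c x), a k, h.eLa hx, h.eaa k1.symm, h.eaa k2, ?_, ?_⟩
      · rintro rfl; exact h.aL _ hx
      · exact fun e => hci (h.ainj _ _ e)
    have paR : ∀ i y, y ∈ R → Path3 (stepGraph R L a c σ f H') y (a i) := by
      intro i y hy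
      obtain ⟨k, k1, -⟩ := third i i
      have hf := h.fL k y hy
      refine ⟨f k y, a k, h.ef hy k, ?_, h.eaa k1, ?_, ?_⟩
      · have := h.eLa (H' := H') hf
        rwa [h.fc k y hy] at this
      · rintro rfl; exact h.aR _ hy
      · intro e; exact h.aL i (e ▸ hf)
    have pLR : ∀ x y, x ∈ L → y ∈ R → ¬ (stepGraph R L a c σ f H').Adj x y →
        Path3 (stepGraph R L a c σ f H') x y := by
      intro x y hx hy hn
      have hf := h.fL (c x) y hy
      refine ⟨a (c x), f (c x) y, h.eLa hx, ?_, (h.ef hy _).symm, ?_, ?_⟩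
      · have := h.eLa (H' := H') hf
        rw [h.fc (c x) y hy] at this
        exact this.symm
      · intro e
        apply hn
        have := h.ef (H' := H') hy (c x)
        rw [← e] at this
        exact this.symm
      · rintro rfl; exact h.aR _ hy
    have pσ : ∀ x y, x ∈ L → y ∈ L → c x = c y → σ x ≠ x → x ≠ y →
        ¬ (stepGraph R L a c σ f H').Adj x y → Path3 (stepGraph R L a c σ f H') x y := by
      intro x y hx hy hc hσ hxy hn
      have h2 := h.eLa (H' := H') (h.σL x hx)
      rw [h.σc x hx] at h2
      have h3 := (h.eLa (H' := H') hy).symm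
      rw [← hc] at h3
      refine ⟨σ x, a (c x), h.eσ hx hσ, h2, h3, ?_, ?_⟩
      · intro e; exact h.aL (c x) (e ▸ hx)
      · rintro rfl; exact hn (h.eσ hx hσ)
    intro u v hu hv hg hn
    rcases (h.hS u).1 hu with hu | hu | ⟨i, rfl⟩
    · rcases (h.hS v).1 hv with hv | hv | ⟨j, rfl⟩
      · obtain ⟨x, y, g1, g2, g3, g4, g5⟩ := hH.sat u v hu hv hg (fun e => hn (by
          rw [stepGraph, SimpleGraph.fromRel_adj]; exact ⟨hg.ne, Or.inl (Or.inl e)⟩))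
        have lift : ∀ {p q}, H'.Adj p q → (stepGraph R L a c σ f H').Adj p q := by
          intro p q e
          rw [stepGraph, SimpleGraph.fromRel_adj]; exact ⟨e.ne, Or.inl (Or.inl e)⟩
        exact ⟨x, y, lift g1, lift g2, lift g3, g4, g5⟩
      · exact (pLR v u hv hu (fun e => hn e.symm)).symm
      · exact paR j u hu
    · rcases (h.hS v).1 hv with hv | hv | ⟨j, rfl⟩
      · exact pLR u v hu hv hn
      · by_cases hc : c u = c v
        · by_cases hσu : σ u = u
          · by_cases hσv : σ v = v
            · exact absurd hg (h.σmax u v hu hv hc hσu hσv)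
            · exact (pσ v u hv hu hc.symm hσv hg.ne' (fun e => hn e.symm)).symm
          · exact pσ u v hu hv hc hσu hg.ne hn
        · refine ⟨a (c u), a (c v), h.eLa hu, h.eaa hc, (h.eLa hv).symm, ?_, ?_⟩
          · intro e; exact h.aL (c v) (e ▸ hu)
          · intro e; exact h.aL (c u) (e ▸ hv)
      · exact paL j u hu (fun e => hn e.symm)
    · rcases (h.hS v).1 hv with hv | hv | ⟨j, rfl⟩
      · exact (paR i v hv).symm
      · exact (paL i v hv hn).symm
      · exfalso
        exact hn (h.eaa (fun e => hg.ne (by rw [e])))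

theorem Level.card (h : Level G S R L a c σ f) [Fintype V] [LinearOrder V] :
    2 * (stepGraph R L a c σ f H').edgeSet.ncard ≤
      2 * H'.edgeSet.ncard + 3 * S.card + 3 * R.card := by
  classical
  have hcS : S.card = R.card + L.card + 3 := by
    have : S = (R.disjUnion L (Finset.disjoint_left.2 h.RL)).disjUnion
        (Finset.univ.map ⟨a, fun i j e => h.ainj i j e⟩) (by
          rw [Finset.disjoint_left]
          intro v hv hv'
          simp only [Finset.mem_map, Finset.mem_univ, true_and] at hv'
          obtain ⟨i, rfl⟩ := hv'
          rcases Finset.mem_disjUnion.1 hv with e | e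
          · exact h.aR _ e
          · exact h.aL _ e) := by
      ext v
      simp only [h.hS, Finset.mem_disjUnion, Finset.mem_map, Finset.mem_univ, true_and,
            or_assoc, eq_comm]
      exact Iff.rfl
    rw [this, Finset.card_disjUnion, Finset.card_disjUnion, Finset.card_map]
    simp
  let E1 : Finset (Sym2 V) := {s(a 0, a 1), s(a 0, a 2), s(a 1, a 2)}
  let E2 : Finset (Sym2 V) := L.image (fun x => s(x, a (c x)))
  let D : Finset V := L.filter (fun x => x < σ x)
  let E3 : Finset (Sym2 V) := D.image (fun x => s(x, σ x))
  let E4 : Finset (Sym2 V) := (R ×ˢ Finset.univ).image (fun z => s(z.1, f z.2 z.1))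
  have hsub : (stepGraph R L a c σ f H').edgeSet ⊆
      H'.edgeSet ∪ ((E1 ∪ E2 ∪ E3 ∪ E4 : Finset (Sym2 V)) : Set (Sym2 V)) := by
    have key : ∀ u v, u ≠ v → (H'.Adj u v ∨ (∃ i j, u = a i ∧ v = a j) ∨
        (u ∈ L ∧ v = a (c u)) ∨ (u ∈ L ∧ v = σ u) ∨ (u ∈ R ∧ ∃ i, v = f i u)) →
        s(u, v) ∈ H'.edgeSet ∪ ((E1 ∪ E2 ∪ E3 ∪ E4 : Finset (Sym2 V)) : Set (Sym2 V)) := by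
      rintro u v hne (hv | ⟨j, k, rfl, rfl⟩ | ⟨hv, rfl⟩ | ⟨hv, rfl⟩ | ⟨hv, k, rfl⟩)
      · exact Or.inl hv
      · right
        have : s(a j, a k) ∈ E1 := by
          fin_cases j <;> fin_cases k <;> simp [E1, Sym2.eq_swap] <;> simp at hne
        simp [this]
      · right
        have : s(u, a (c u)) ∈ E2 := Finset.mem_image_of_mem _ hv
        simp [this]
      · right
        have : s(u, σ u) ∈ E3 := by
          rcases lt_or_gt_of_ne hne with hlt | hlt
          · exact Finset.mem_image.2 ⟨u, Finset.mem_filter.2 ⟨hv, hlt⟩, rfl⟩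
          · refine Finset.mem_image.2 ⟨σ u, Finset.mem_filter.2 ⟨h.σL _ hv, ?_⟩, ?_⟩
            · rwa [h.σσ]
            · rw [h.σσ, Sym2.eq_swap]
        simp [this]
      · right
        have : s(u, f k u) ∈ E4 := Finset.mem_image.2 ⟨(u, k), by simp [hv], rfl⟩
        simp [this]
    intro e he
    induction e with
    | _ u v =>
      rw [SimpleGraph.mem_edgeSet, stepGraph, SimpleGraph.fromRel_adj] at he
      rcases he with ⟨hne, hv | hv⟩
      · exact key u v hne hv
      · rw [Sym2.eq_swap]; exact key v u hne.symm hv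
  have hD : 2 * D.card ≤ L.card := by
    have h1 : (D.image σ).card = D.card :=
      Finset.card_image_of_injective _ (fun x y e => by rw [← h.σσ x, e, h.σσ])
    have h2 : Disjoint D (D.image σ) := by
      rw [Finset.disjoint_left]
      intro x hx hx'
      obtain ⟨y, hy, rfl⟩ := Finset.mem_image.1 hx'
      have e1 := (Finset.mem_filter.1 hx).2
      have e2 := (Finset.mem_filter.1 hy).2
      rw [h.σσ] at e1
      exact lt_asymm e1 e2
    have h3 : D ∪ D.image σ ⊆ L := by
      intro x hx
      rcases Finset.mem_union.1 hx with e | e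
      · exact (Finset.mem_filter.1 e).1
      · obtain ⟨y, hy, rfl⟩ := Finset.mem_image.1 e
        exact h.σL _ (Finset.mem_filter.1 hy).1
    have h4 := Finset.card_le_card h3
    rw [Finset.card_union_of_disjoint h2, h1] at h4
    omega
  have hc1 : E1.card ≤ 3 := Finset.card_le_three
  have hc2 : E2.card ≤ L.card := Finset.card_image_le
  have hc3 : E3.card ≤ D.card := Finset.card_image_le
  have hc4 : E4.card ≤ 3 * R.card := by
    refine Finset.card_image_le.trans ?_
    rw [Finset.card_product]; simp [mul_comm]
  have hcU : (E1 ∪ E2 ∪ E3 ∪ E4).card ≤ E1.card + E2.card + E3.card + E4.card := by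
    refine (Finset.card_union_le _ _).trans ?_
    have := Finset.card_union_le (E1 ∪ E2) E3
    have := Finset.card_union_le E1 E2
    omega
  have hfin := Set.ncard_le_ncard hsub (Set.toFinite _)
  have hun := Set.ncard_union_le H'.edgeSet
    ((E1 ∪ E2 ∪ E3 ∪ E4 : Finset (Sym2 V)) : Set (Sym2 V))
  rw [Set.ncard_coe_finset] at hun
  omega

end Level

/-! ### Maximal matchings and typical graphs -/

theorem exists_matching {V : Type*} [Fintype V] [DecidableEq V] (B : V → V → Prop)
    (hsymm : ∀ x y, B x y → B y x) :
    ∃ σ : V → V, (∀ x, σ (σ x) = x) ∧ (∀ x, σ x = x ∨ B x (σ x)) ∧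
      ∀ x y, x ≠ y → σ x = x → σ y = y → ¬ B x y := by
  classical
  obtain ⟨σ, hσ, hmax⟩ := (Set.toFinite {σ : V → V | (∀ x, σ (σ x) = x) ∧
    (∀ x, σ x = x ∨ B x (σ x))}).exists_maximalFor
      (fun σ : V → V => (Finset.univ.filter (fun x => σ x ≠ x)).card) _
      ⟨id, by simp⟩
  obtain ⟨h1, h2⟩ := hσ
  refine ⟨σ, h1, h2, ?_⟩
  intro x y hxy hx hy hB
  let τ : V → V := fun z => if z = x then y else if z = y then x else σ z
  have τx : τ x = y := by simp [τ]
  have τy : τ y = x := by simp [τ, hxy.symm]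
  have τz : ∀ z, z ≠ x → z ≠ y → τ z = σ z := by
    intro z e1 e2; simp [τ, e1, e2]
  have hτ : (∀ z, τ (τ z) = z) ∧ (∀ z, τ z = z ∨ B z (τ z)) := by
    constructor
    · intro z
      by_cases e1 : z = x
      · rw [e1, τx, τy]
      by_cases e2 : z = y
      · rw [e2, τy, τx]
      rw [τz z e1 e2, τz, h1]
      · intro e; apply e1; rw [← h1 z, e, hx]
      · intro e; apply e2; rw [← h1 z, e, hy]
    · intro z
      by_cases e1 : z = x
      · rw [e1, τx]; exact Or.inr hB
      by_cases e2 : z = y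
      · rw [e2, τy]; exact Or.inr (hsymm _ _ hB)
      rw [τz z e1 e2]; exact h2 z
  have hlt : (Finset.univ.filter (fun z => σ z ≠ z)).card <
      (Finset.univ.filter (fun z => τ z ≠ z)).card := by
    apply Finset.card_lt_card
    rw [Finset.ssubset_iff_of_subset]
    · exact ⟨x, by simp [τx, hxy.symm], by simp [hx]⟩
    · intro z hz
      simp only [Finset.mem_filter, Finset.mem_univ, true_and] at hz ⊢
      rw [τz z (by rintro rfl; exact hz hx) (by rintro rfl; exact hz hy)]
      exact hz
  have := hmax hτ hlt.le
  exact absurd hlt (not_lt.2 this)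

open Classical in
/-- Vertices outside `T` adjacent to all of `A` and to none of `T`. -/
noncomputable def nbhd {V : Type*} [Fintype V] (G : SimpleGraph V) (A T : Finset V) : Finset V :=
  Finset.univ.filter (fun x => x ∉ T ∧ (∀ a ∈ A, G.Adj x a) ∧ ∀ b ∈ T, ¬ G.Adj x b)

theorem mem_nbhd {V : Type*} [Fintype V] {G : SimpleGraph V} {A T : Finset V} {x : V} :
    x ∈ nbhd G A T ↔ x ∉ T ∧ (∀ a ∈ A, G.Adj x a) ∧ ∀ b ∈ T, ¬ G.Adj x b := by
  simp [nbhd]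

/-- The pseudo-randomness property used in the construction. -/
def Typical {V : Type*} [Fintype V] (G : SimpleGraph V) (p η : ℝ) (τ : ℕ) : Prop :=
  ∀ A T : Finset V, Disjoint A T → A.card ≤ 3 → T.card ≤ τ →
    |((nbhd G A T).card : ℝ) - p ^ A.card * (1 - p) ^ T.card * Fintype.card V| ≤
      η * (p ^ A.card * (1 - p) ^ T.card * Fintype.card V)

/-- Splitting a finite set into three nearly equal parts. -/
theorem exists_split3 {V : Type*} [DecidableEq V] (D : Finset V) :
    ∃ g : V → Fin 3, ∀ i, D.card ≤ 3 * (D.filter (fun x => g x = i)).card + 3 := by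
  classical
  let e := D.equivFin
  let g : V → Fin 3 := fun x => if h : x ∈ D then ⟨(e ⟨x, h⟩).1 % 3, Nat.mod_lt _ (by norm_num)⟩ else 0
  refine ⟨g, fun i => ?_⟩
  have hinj : ((Finset.range (D.card / 3)).image (fun k => 3 * k + i.1)).card = D.card / 3 := by
    rw [Finset.card_image_of_injective _ (fun x y h => by simpa using h), Finset.card_range]
  have hle : ((Finset.range (D.card / 3)).image (fun k => 3 * k + i.1)).card ≤
      (D.filter (fun x => g x = i)).card := by
    have hsub : ((Finset.range (D.card / 3)).image (fun k => 3 * k + i.1)) ⊆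
        (D.filter (fun x => g x = i)).image (fun x => if h : x ∈ D then (e ⟨x, h⟩).1 else 0) := by
      intro m hm
      obtain ⟨k, hk, rfl⟩ := Finset.mem_image.1 hm
      have hk := Finset.mem_range.1 hk
      have hlt : 3 * k + i.1 < D.card := by have := i.2; omega
      refine Finset.mem_image.2 ⟨(e.symm ⟨3 * k + i.1, hlt⟩).1, ?_, ?_⟩
      · rw [Finset.mem_filter]
        refine ⟨(e.symm ⟨3 * k + i.1, hlt⟩).2, ?_⟩
        apply Fin.ext
        simp only [g, Finset.coe_mem, dif_pos, Subtype.coe_eta, Equiv.apply_symm_apply]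
        have := i.2
        omega
      · simp
    exact (Finset.card_le_card hsub).trans Finset.card_image_le
  omega

theorem exists_attach {V : Type*} [Fintype V] [DecidableEq V] (G : SimpleGraph V)
    [DecidableRel G.Adj] (R C : Finset V)
    (σ : V → V) (hσ : ∀ x, σ (σ x) = x) (j : ℕ)
    (hdeg : ∀ y ∈ R, 2 * j ≤ (C.filter (fun x => G.Adj y x)).card)
    (hexp : ∀ Y ⊆ R, Y.card = j →
      2 * R.card + (C.filter (fun x => ∀ y ∈ Y, ¬ G.Adj y x)).card ≤ C.card) :
    ∃ f : V → V, ∀ y ∈ R, f y ∈ C ∧ G.Adj y (f y) ∧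
      ∀ z ∈ R, (f y = f z → y = z) ∧ (σ (f y) = f z → y = z) := by
  classical
  let u : V → Sym2 V := fun x => s(x, σ x)
  have hu : ∀ D : Finset V, D.card ≤ 2 * (D.image u).card := by
    intro D
    apply Finset.card_le_mul_card_image
    intro b _
    induction b with
    | _ p q =>
      refine (Finset.card_le_card (t := {p, q}) ?_).trans Finset.card_le_two
      intro x hx
      have hx := (Finset.mem_filter.1 hx).2
      simp only [u, Sym2.eq_iff] at hx
      simp only [Finset.mem_insert, Finset.mem_singleton]
      rcases hx with hx | hx
      · exact Or.inl hx.1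
      · exact Or.inr hx.1
  let t : R → Finset (Sym2 V) := fun y => (C.filter (fun x => G.Adj y.1 x)).image u
  have hall : ∀ Y : Finset R, Y.card ≤ (Y.biUnion t).card := by
    intro Y
    rcases le_or_gt Y.card j with hY | hY
    · rcases Y.eq_empty_or_nonempty with rfl | ⟨y, hy⟩
      · simp
      have h1 : t y ⊆ Y.biUnion t := Finset.subset_biUnion_of_mem t hy
      have h2 := Finset.card_le_card h1
      have h3 := hdeg y.1 y.2
      have h4 := hu (C.filter (fun x => G.Adj y.1 x))
      change _ ≤ 2 * (t y).card at h4
      omega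
    · obtain ⟨Y', hY', hc⟩ := Finset.exists_subset_card_eq hY.le
      let Z : Finset V := Y'.map ⟨Subtype.val, Subtype.val_injective⟩
      have hZR : Z ⊆ R := by
        intro z hz
        obtain ⟨y, -, rfl⟩ := Finset.mem_map.1 hz
        exact y.2
      have hZc : Z.card = j := by rw [Finset.card_map, hc]
      have h1 := hexp Z hZR hZc
      have h2 : (C.filter (fun x => ¬ ∀ y ∈ Z, ¬ G.Adj y x)).image u ⊆ Y.biUnion t := by
        intro e he
        obtain ⟨x, hx, rfl⟩ := Finset.mem_image.1 he
        obtain ⟨hxC, hx⟩ := Finset.mem_filter.1 hx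
        push Not at hx
        obtain ⟨z, hz, hzx⟩ := hx
        obtain ⟨y, hy, rfl⟩ := Finset.mem_map.1 hz
        exact Finset.mem_biUnion.2 ⟨y, hY' hy, Finset.mem_image.2
          ⟨x, Finset.mem_filter.2 ⟨hxC, hzx⟩, rfl⟩⟩
      have h3 := Finset.card_le_card h2
      have h4 := hu (C.filter (fun x => ¬ ∀ y ∈ Z, ¬ G.Adj y x))
      have h5 := Finset.card_filter_add_card_filter_not (s := C) (fun x => ∀ y ∈ Z, ¬ G.Adj y x)
      have h6 : Y.card ≤ R.card := by
        have := Finset.card_le_univ Y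
        simpa using this
      omega
  obtain ⟨g, ginj, hg⟩ := (Finset.all_card_le_biUnion_card_iff_exists_injective t).1 hall
  have hex : ∀ y : V, ∃ x : V, ∀ h : y ∈ R, x ∈ C ∧ G.Adj y x ∧ u x = g ⟨y, h⟩ := by
    intro y
    by_cases h : y ∈ R
    · obtain ⟨x, hx, e⟩ := Finset.mem_image.1 (hg ⟨y, h⟩)
      obtain ⟨h1, h2⟩ := Finset.mem_filter.1 hx
      exact ⟨x, fun _ => ⟨h1, h2, e⟩⟩
    · exact ⟨y, fun h' => absurd h' h⟩
  choose f hf using hex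
  refine ⟨f, fun y hy => ⟨(hf y hy).1, (hf y hy).2.1, fun z hz => ?_⟩⟩
  have key : u (f y) = u (f z) → y = z := by
    intro e
    rw [(hf y hy).2.2, (hf z hz).2.2] at e
    exact congrArg Subtype.val (ginj e)
  refine ⟨fun e => key (by rw [e]), fun e => key ?_⟩
  simp only [u]
  rw [← e, hσ, Sym2.eq_swap]

theorem cyc3 : ∀ b : Fin 3 → Bool, (∃ i, b i = true) → (∃ i, b i = false) →
    ∃ i, (b i = true ∧ b (i + 1) = false) ∧
      ∀ k, b k = true → b (k + 1) = false → k = i := by decide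

theorem exists_level {V : Type*} [Fintype V] [DecidableEq V] (G : SimpleGraph V)
    {p η : ℝ} {τ j : ℕ} (hp0 : 0 < p) (hp1 : p < 1) (hη1 : η < 1)
    (hG : Typical G p η τ) (T : Finset V) (hT3 : T.card + 3 ≤ τ) (hTj : T.card + j ≤ τ)
    (w : ℝ) (hwdef : w = (1 - p) ^ T.card * Fintype.card V) (hw : 0 < w)
    (hw1 : 2 * j ≤ (1 - η) * (p ^ 2 * (1 - p)) * w)
    (hw2 : 2 * ((1 + η) * (1 - p) ^ 3 * w) + (1 + η) * (1 - p) ^ j * w + 1 ≤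
      (1 - η) * (p * (1 - p)) * w + (1 - η) * p ^ 3 * w / 3) :
    ∃ (T' L : Finset V) (a : Fin 3 → V) (c : V → Fin 3) (σ : V → V) (f : Fin 3 → V → V),
      T'.card = T.card + 3 ∧ Level G (nbhd G ∅ T) (nbhd G ∅ T') L a c σ f := by
  classical
  have hq0 : 0 < 1 - p := by linarith
  have hη1' : 0 < 1 - η := by linarith
  have lower : ∀ (A T' : Finset V) (k l : ℕ), Disjoint A T' → A.card = k → k ≤ 3 →
      T'.card = T.card + l → T.card + l ≤ τ →
      (1 - η) * (p ^ k * (1 - p) ^ l) * w ≤ (nbhd G A T').card := by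
    intro A T' k l hd hk hk3 hl hlτ
    have h := (abs_le.1 (hG A T' hd (hk ▸ hk3) (hl ▸ hlτ))).1
    rw [hk, hl, pow_add] at h
    rw [hwdef]
    nlinarith
  have upper : ∀ (T' : Finset V) (l : ℕ),
      T'.card = T.card + l → T.card + l ≤ τ →
      ((nbhd G ∅ T').card : ℝ) ≤ (1 + η) * (1 - p) ^ l * w := by
    intro T' l hl hlτ
    have h := (abs_le.1 (hG ∅ T' (Finset.disjoint_empty_left _) (by simp) (hl ▸ hlτ))).2
    rw [hl, pow_add] at h
    rw [hwdef]
    simp only [Finset.card_empty, pow_zero, one_mul] at h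
    nlinarith
  have pos : ∀ (A : Finset V), Disjoint A T → A.card ≤ 3 → (nbhd G A T).Nonempty := by
    intro A hd hk
    have h := lower A T A.card 0 hd rfl hk (by simp) (by omega)
    have h2 : 0 < (1 - η) * (p ^ A.card * (1 - p) ^ 0) * w := by positivity
    rw [← Finset.card_pos]
    exact_mod_cast h2.trans_le h
  -- the triangle
  obtain ⟨a0, ha0⟩ := pos ∅ (Finset.disjoint_empty_left _) (by simp)
  have ha0 := mem_nbhd.1 ha0
  obtain ⟨a1, ha1⟩ := pos {a0} (by simpa using ha0.1) (by simp)
  have ha1 := mem_nbhd.1 ha1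
  obtain ⟨a2, ha2⟩ := pos {a0, a1} (by simp [ha0.1, ha1.1])
    (Finset.card_le_two.trans (by norm_num))
  have ha2 := mem_nbhd.1 ha2
  let a : Fin 3 → V := ![a0, a1, a2]
  have aa : ∀ i k, i ≠ k → G.Adj (a i) (a k) := by
    have h10 : G.Adj a1 a0 := ha1.2.1 a0 (by simp)
    have h20 : G.Adj a2 a0 := ha2.2.1 a0 (by simp)
    have h21 : G.Adj a2 a1 := ha2.2.1 a1 (by simp)
    intro i k
    fin_cases i <;> fin_cases k <;> simp [a, h10, h20, h21, h10.symm, h20.symm, h21.symm]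
  have aS : ∀ i, a i ∈ nbhd G ∅ T := by
    intro i
    rw [mem_nbhd]
    fin_cases i
    · exact ⟨ha0.1, by simp, ha0.2.2⟩
    · exact ⟨ha1.1, by simp, ha1.2.2⟩
    · exact ⟨ha2.1, by simp, ha2.2.2⟩
  have aT : ∀ i, a i ∉ T := fun i => (mem_nbhd.1 (aS i)).1
  have ainj : Function.Injective a := by
    intro i k e
    by_contra hne
    exact (aa i k hne).ne e
  have ne1 : ∀ i : Fin 3, i ≠ i + 1 := by decide
  let A3 : Finset V := Finset.univ.map ⟨a, ainj⟩
  have memA3 : ∀ v, v ∈ A3 ↔ ∃ i, a i = v := by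
    intro v
    simp only [A3, Finset.mem_map, Finset.mem_univ, true_and]
    exact Iff.rfl
  have cardA3 : A3.card = 3 := by simp [A3]
  have disA3 : Disjoint A3 T := by
    rw [Finset.disjoint_left]
    intro v hv
    obtain ⟨i, rfl⟩ := (memA3 v).1 hv
    exact aT i
  let T' : Finset V := A3 ∪ T
  have cardT' : T'.card = T.card + 3 := by
    rw [Finset.card_union_of_disjoint disA3, cardA3, add_comm]
  let S := nbhd G ∅ T
  let R := nbhd G ∅ T'
  have memS : ∀ v, v ∈ S ↔ v ∉ T ∧ ∀ b ∈ T, ¬ G.Adj v b := by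
    intro v; simp only [S, mem_nbhd]; simp
  have memR : ∀ v, v ∈ R ↔ v ∈ S ∧ (∀ i, v ≠ a i) ∧ ∀ i, ¬ G.Adj v (a i) := by
    intro v
    rw [memS]
    simp only [R, mem_nbhd, T', Finset.mem_union, memA3]
    constructor
    · rintro ⟨h1, -, h2⟩
      push Not at h1
      exact ⟨⟨h1.2, fun b hb => h2 b (Or.inr hb)⟩, fun i => (h1.1 i).symm,
        fun i => h2 _ (Or.inl ⟨i, rfl⟩)⟩
    · rintro ⟨⟨h1, h2⟩, h3, h4⟩
      refine ⟨?_, by simp, ?_⟩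
      · rintro (⟨i, rfl⟩ | h)
        · exact h3 i rfl
        · exact h1 h
      · rintro b (⟨i, rfl⟩ | h)
        · exact h4 i
        · exact h2 b h
  let L : Finset V := S.filter (fun x => x ∉ R ∧ ∀ i, x ≠ a i)
  have memL : ∀ v, v ∈ L ↔ v ∈ S ∧ v ∉ R ∧ ∀ i, v ≠ a i := by
    intro v; simp [L]
  have Ladj : ∀ x ∈ L, ∃ i, G.Adj x (a i) := by
    intro x hx
    obtain ⟨h1, h2, h3⟩ := (memL x).1 hx
    by_contra hne
    push Not at hne
    exact h2 ((memR x).2 ⟨h1, h3, hne⟩)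
  -- the classes
  let D : Finset V := nbhd G A3 T
  have memD : ∀ x, x ∈ D ↔ x ∈ S ∧ ∀ i, G.Adj x (a i) := by
    intro x
    rw [memS]
    simp only [D, mem_nbhd, memA3]
    constructor
    · rintro ⟨h1, h2, h3⟩
      exact ⟨⟨h1, h3⟩, fun i => h2 _ ⟨i, rfl⟩⟩
    · rintro ⟨⟨h1, h3⟩, h2⟩
      refine ⟨h1, ?_, h3⟩
      rintro b ⟨i, rfl⟩
      exact h2 i
  have DL : ∀ x ∈ D, x ∈ L := by
    intro x hx
    obtain ⟨h1, h2⟩ := (memD x).1 hx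
    rw [memL]
    refine ⟨h1, fun h => ((memR x).1 h).2.2 0 (h2 0), ?_⟩
    rintro i rfl
    exact (h2 i).ne rfl
  obtain ⟨g, hg⟩ := exists_split3 D
  have hcex : ∀ x, ∃ i : Fin 3, (x ∈ D → i = g x) ∧ (x ∈ L → x ∉ D → G.Adj x (a i) ∧
      ∀ k, G.Adj x (a k) → ¬ G.Adj x (a (k + 1)) → k = i) := by
    intro x
    by_cases hD : x ∈ D
    · exact ⟨g x, fun _ => rfl, fun _ h => absurd hD h⟩
    by_cases hL : x ∈ L
    · obtain ⟨i, ⟨h1, h2⟩, h3⟩ := cyc3 (fun i => decide (G.Adj x (a i)))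
        (by simpa using Ladj x hL) (by
          by_contra hne
          apply hD
          rw [memD]
          refine ⟨((memL x).1 hL).1, ?_⟩
          simpa using hne)
      refine ⟨i, fun h => absurd h hD, fun _ _ => ⟨by simpa using h1, fun k e1 e2 => ?_⟩⟩
      exact h3 k (by simpa using e1) (by simpa using e2)
    · exact ⟨0, fun h => absurd h hD, fun h => absurd h hL⟩
  choose c hc using hcex
  have cL : ∀ x ∈ L, G.Adj x (a (c x)) := by
    intro x hx
    by_cases hD : x ∈ D
    · exact ((memD x).1 hD).2 _
    · exact ((hc x).2 hx hD).1
  let C : Fin 3 → Finset V := fun i => L.filter (fun x => c x = i)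
  have memC : ∀ i x, x ∈ C i ↔ x ∈ L ∧ c x = i := by
    intro i x; simp [C]
  have cardI : ∀ i, (insert (a (i + 1)) T).card = T.card + 1 := by
    intro i
    rw [Finset.card_insert_of_notMem (aT _)]
  let P : Fin 3 → Finset V := fun i => nbhd G {a i} (insert (a (i + 1)) T)
  have PC : ∀ i, ∀ x ∈ P i, x ∈ C i ∧ x ∉ D := by
    intro i x hx
    obtain ⟨h1, h2, h3⟩ := mem_nbhd.1 hx
    simp only [Finset.mem_insert, not_or, forall_eq_or_imp, Finset.mem_singleton,
      forall_eq] at h1 h2 h3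
    have hxS : x ∈ S := (memS x).2 ⟨h1.2, h3.2⟩
    have hxD : x ∉ D := fun h => h3.1 (((memD x).1 h).2 _)
    have hxL : x ∈ L := by
      rw [memL]
      refine ⟨hxS, fun h => ((memR x).1 h).2.2 i h2, ?_⟩
      rintro k rfl
      by_cases hk : k = i + 1
      · exact h1.1 (by rw [hk])
      · exact h3.1 (aa _ _ hk)
    exact ⟨(memC i x).2 ⟨hxL, (((hc x).2 hxL hxD).2 i h2 h3.1).symm⟩, hxD⟩
  have cardC : ∀ i, (1 - η) * (p * (1 - p)) * w + (1 - η) * p ^ 3 * w / 3 - 1 ≤ (C i).card := by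
    intro i
    have h1 := lower {a i} (insert (a (i + 1)) T) 1 1 (by
      simp only [Finset.disjoint_singleton_left, Finset.mem_insert, not_or]
      exact ⟨fun e => ne1 i (ainj e), aT i⟩) (by simp) (by norm_num) (cardI i) (by omega)
    change _ ≤ ((P i).card : ℝ) at h1
    have h2 := lower A3 T 3 0 disA3 cardA3 le_rfl rfl (by omega)
    change _ ≤ (D.card : ℝ) at h2
    have h3 : (D.card : ℝ) ≤ 3 * ((D.filter (fun x => g x = i)).card : ℝ) + 3 := by
      exact_mod_cast hg i
    have h4 : P i ∪ D.filter (fun x => g x = i) ⊆ C i := by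
      intro x hx
      rcases Finset.mem_union.1 hx with hx | hx
      · exact (PC i x hx).1
      · obtain ⟨hx1, hx2⟩ := Finset.mem_filter.1 hx
        exact (memC i x).2 ⟨DL x hx1, ((hc x).1 hx1).trans hx2⟩
    have h5 : Disjoint (P i) (D.filter (fun x => g x = i)) := by
      rw [Finset.disjoint_left]
      intro x hx hx'
      exact (PC i x hx).2 (Finset.mem_filter.1 hx').1
    have h6 := Finset.card_le_card h4
    rw [Finset.card_union_of_disjoint h5] at h6
    have h7 : ((P i).card : ℝ) + ((D.filter (fun x => g x = i)).card : ℝ) ≤ (C i).card := by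
      exact_mod_cast h6
    simp only [pow_one, pow_zero, mul_one] at h1 h2
    linarith
  -- the matching
  obtain ⟨σ, σσ, σB, σmax⟩ := exists_matching
    (fun x y => x ∈ L ∧ y ∈ L ∧ c x = c y ∧ G.Adj x y)
    (fun x y ⟨h1, h2, h3, h4⟩ => ⟨h2, h1, h3.symm, h4.symm⟩)
  -- the attachments
  have att : ∀ i, ∃ f : V → V, ∀ y ∈ R, f y ∈ C i ∧ G.Adj y (f y) ∧
      ∀ z ∈ R, (f y = f z → y = z) ∧ (σ (f y) = f z → y = z) := by
    intro i
    apply exists_attach G R (C i) σ σσ j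
    · intro y hy
      have hyR := (memR y).1 hy
      have hyS := (memS y).1 hyR.1
      have hcard2 : ({y, a i} : Finset V).card = 2 := Finset.card_pair (hyR.2.1 i)
      have h1 := lower {y, a i} (insert (a (i + 1)) T) 2 1 (by
        rw [Finset.disjoint_left]
        intro v hv
        simp only [Finset.mem_insert, Finset.mem_singleton] at hv
        simp only [Finset.mem_insert, not_or]
        rcases hv with rfl | rfl
        · exact ⟨hyR.2.1 _, hyS.1⟩
        · exact ⟨fun e => ne1 i (ainj e), aT i⟩) hcard2 (by norm_num) (cardI i) (by omega)
      have h2 : nbhd G {y, a i} (insert (a (i + 1)) T) ⊆ (C i).filter (fun x => G.Adj y x) := by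
        intro x hx
        obtain ⟨h1, h2, h3⟩ := mem_nbhd.1 hx
        rw [Finset.mem_filter]
        refine ⟨(PC i x (mem_nbhd.2 ⟨h1, fun b hb => h2 b ?_, h3⟩)).1, (h2 y (by simp)).symm⟩
        rw [Finset.mem_singleton] at hb
        simp [hb]
      have h3 : ((nbhd G {y, a i} (insert (a (i + 1)) T)).card : ℝ) ≤
          ((C i).filter (fun x => G.Adj y x)).card := by
        exact_mod_cast Finset.card_le_card h2
      rw [pow_one] at h1
      have : ((2 * j : ℕ) : ℝ) ≤ ((C i).filter (fun x => G.Adj y x)).card := by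
        push_cast
        linarith
      exact_mod_cast this
    · intro Y hYR hYj
      have hdis : Disjoint Y T := by
        rw [Finset.disjoint_left]
        intro y hy
        exact ((memS y).1 ((memR y).1 (hYR hy)).1).1
      have h1 := upper (Y ∪ T) j (by rw [Finset.card_union_of_disjoint hdis, hYj, add_comm]) hTj
      have h2 : (C i).filter (fun x => ∀ y ∈ Y, ¬ G.Adj y x) ⊆ nbhd G ∅ (Y ∪ T) := by
        intro x hx
        obtain ⟨h1, h2⟩ := Finset.mem_filter.1 hx
        have hxL := (memL x).1 ((memC i x).1 h1).1
        have hxS := (memS x).1 hxL.1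
        rw [mem_nbhd]
        refine ⟨?_, by simp, ?_⟩
        · rw [Finset.mem_union, not_or]
          exact ⟨fun h => hxL.2.1 (hYR h), hxS.1⟩
        · intro b hb
          rcases Finset.mem_union.1 hb with hb | hb
          · exact fun e => h2 b hb e.symm
          · exact hxS.2 b hb
      have h3 : (((C i).filter (fun x => ∀ y ∈ Y, ¬ G.Adj y x)).card : ℝ) ≤
          (nbhd G ∅ (Y ∪ T)).card := by exact_mod_cast Finset.card_le_card h2
      have h4 := upper T' 3 cardT' hT3
      change (R.card : ℝ) ≤ _ at h4
      have h5 := cardC i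
      have : ((2 * R.card + ((C i).filter (fun x => ∀ y ∈ Y, ¬ G.Adj y x)).card : ℕ) : ℝ) ≤
          (C i).card := by
        push_cast
        linarith
      exact_mod_cast this
  choose f hf using att
  refine ⟨T', L, a, c, σ, f, cardT', ?_⟩
  have σL : ∀ x, x ∈ L → σ x ∈ L := by
    intro x hx
    rcases σB x with e | e
    · rwa [e]
    · exact e.2.1
  refine
    { hS := ?_, aR := ?_, aL := ?_, RL := ?_, aa := aa, cL := cL, σσ := σσ, σL := σL, σc := ?_
      σG := ?_, σmax := ?_
      fL := fun i y hy => ((memC i _).1 (hf i y hy).1).1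
      fc := fun i y hy => ((memC i _).1 (hf i y hy).1).2
      fG := fun i y hy => (hf i y hy).2.1
      finj := fun i y z hy hz => ((hf i y hy).2.2 z hz).1
      fσ := fun i y z hy hz => ((hf i y hy).2.2 z hz).2 }
  · intro v
    change v ∈ S ↔ (v ∈ R ∨ _)
    constructor
    · intro hv
      by_cases h1 : v ∈ R
      · exact Or.inl h1
      by_cases h2 : ∃ i, v = a i
      · exact Or.inr (Or.inr h2)
      push Not at h2
      exact Or.inr (Or.inl ((memL v).2 ⟨hv, h1, h2⟩))
    · rintro (h | h | ⟨i, rfl⟩)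
      · exact ((memR v).1 h).1
      · exact ((memL v).1 h).1
      · exact aS i
  · intro i h
    exact ((memR _).1 h).2.1 i rfl
  · intro i h
    exact ((memL _).1 h).2.2 i rfl
  · intro v hv h
    exact ((memL _).1 h).2.1 hv
  · intro x hx
    rcases σB x with e | e
    · rw [e]
    · exact e.2.2.1.symm
  · intro x hx
    rcases σB x with e | e
    · exact Or.inl e
    · exact Or.inr e.2.2.2
  · intro x y hx hy hxy e1 e2 hadj
    exact σmax x y hadj.ne e1 e2 ⟨hx, hy, hxy, hadj⟩

theorem sat_bound {V : Type*} [Fintype V] [LinearOrder V] (G : SimpleGraph V)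
    {p η κ : ℝ} {K j : ℕ} (hp0 : 0 < p) (hp1 : p < 1) (hη0 : 0 < η) (hη1 : η < 1)
    (hG : Typical G p η (3 * K + j))
    (hκ : 2 * ((1 + η) * (1 - p) ^ 3) + (1 + η) * (1 - p) ^ j + κ ≤
      (1 - η) * (p * (1 - p)) + (1 - η) * p ^ 3 / 3) (hκ0 : 0 ≤ κ)
    (hK1 : 2 * j ≤ (1 - η) * (p ^ 2 * (1 - p)) * ((1 - p) ^ (3 * K) * Fintype.card V))
    (hK2 : 1 ≤ κ * ((1 - p) ^ (3 * K) * Fintype.card V)) :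
    (satNum G (cycGraph 4) : ℝ) ≤
      (1 + η) * (3 * (1 + (1 - p) ^ 3) / (2 * (1 - (1 - p) ^ 3)) * Fintype.card V) +
        ((1 + η) * ((1 - p) ^ (3 * K) * Fintype.card V)) ^ 2 := by
  have hq0 : 0 < 1 - p := by linarith
  have hq1 : 1 - p < 1 := by linarith
  have hQ1 : (1 - p) ^ 3 < 1 := pow_lt_one₀ hq0.le hq1 (by norm_num)
  have hN : (0 : ℝ) < Fintype.card V := by
    rcases Nat.eq_zero_or_pos (Fintype.card V) with h | h
    · rw [h] at hK2; norm_num at hK2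
    · exact_mod_cast h
  have hcard : ∀ T : Finset V, T.card ≤ 3 * K + j →
      ((nbhd G ∅ T).card : ℝ) ≤ (1 + η) * ((1 - p) ^ T.card * Fintype.card V) := by
    intro T hT
    have h := (abs_le.1 (hG ∅ T (Finset.disjoint_empty_left _) (by simp) hT)).2
    simp only [Finset.card_empty, pow_zero, one_mul] at h
    linarith
  have main : ∀ d k : ℕ, k + d = K → ∀ T : Finset V, T.card = 3 * k →
      ∃ H, SatOn G (nbhd G ∅ T) H ∧ (H.edgeSet.ncard : ℝ) ≤
        (1 + η) * (3 * (1 + (1 - p) ^ 3) / (2 * (1 - (1 - p) ^ 3)) *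
          ((1 - p) ^ (3 * k) * Fintype.card V)) +
        ((1 + η) * ((1 - p) ^ (3 * K) * Fintype.card V)) ^ 2 := by
    intro d
    induction d with
    | zero =>
      intro k hk T hT
      obtain ⟨H, h1, h2⟩ := exists_satOn G (nbhd G ∅ T)
      refine ⟨H, h1, ?_⟩
      have h3 := hcard T (by omega)
      have hkK : k = K := by omega
      subst hkK
      rw [hT] at h3
      have h4 : (H.edgeSet.ncard : ℝ) ≤ ((nbhd G ∅ T).card : ℝ) ^ 2 := by exact_mod_cast h2
      have h5 : ((nbhd G ∅ T).card : ℝ) ^ 2 ≤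
          ((1 + η) * ((1 - p) ^ (3 * k) * Fintype.card V)) ^ 2 :=
        pow_le_pow_left₀ (by positivity) h3 2
      have h6 : 0 ≤ (1 + η) * (3 * (1 + (1 - p) ^ 3) / (2 * (1 - (1 - p) ^ 3)) *
          ((1 - p) ^ (3 * k) * Fintype.card V)) := by
        have : 0 < 1 - (1 - p) ^ 3 := by linarith
        positivity
      linarith
    | succ d ih =>
      intro k hk T hT
      have hmono : (1 - p) ^ (3 * K) * Fintype.card V ≤ (1 - p) ^ T.card * (Fintype.card V : ℝ) := by
        apply mul_le_mul_of_nonneg_right _ hN.le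
        exact pow_le_pow_of_le_one hq0.le hq1.le (by omega)
      have hw : 0 < (1 - p) ^ T.card * (Fintype.card V : ℝ) := by positivity
      obtain ⟨T', L, a, c, σ, f, hT', hl⟩ := exists_level G hp0 hp1 hη1 hG T (by omega) (by omega)
        _ rfl hw
        (hK1.trans (mul_le_mul_of_nonneg_left hmono
          (mul_nonneg (by linarith) (by positivity))))
        (by
          have := hK2.trans (mul_le_mul_of_nonneg_left hmono hκ0)
          have h2 := mul_le_mul_of_nonneg_right hκ hw.le
          nlinarith)
      obtain ⟨H', hH', hc'⟩ := ih (k + 1) (by omega) T' (by omega)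
      refine ⟨_, hl.sat hH', ?_⟩
      have h1 := hl.card (H' := H')
      have h1' : 2 * ((stepGraph (nbhd G ∅ T') L a c σ f H').edgeSet.ncard : ℝ) ≤
          2 * H'.edgeSet.ncard + 3 * (nbhd G ∅ T).card + 3 * (nbhd G ∅ T').card := by
        exact_mod_cast h1
      have h2 := hcard T (by omega)
      have h3 := hcard T' (by omega)
      rw [hT', hT, pow_add] at h3
      rw [hT] at h2
      rw [show 3 * (k + 1) = 3 * k + 3 by ring, pow_add] at hc'
      have hd : 1 - (1 - p) ^ 3 ≠ 0 := by linarith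
      have key : (1 + η) * (3 * (1 + (1 - p) ^ 3) / (2 * (1 - (1 - p) ^ 3)) *
          ((1 - p) ^ (3 * k) * Fintype.card V)) =
          (1 + η) * (3 * (1 + (1 - p) ^ 3) / (2 * (1 - (1 - p) ^ 3)) *
          ((1 - p) ^ (3 * k) * (1 - p) ^ 3 * Fintype.card V)) +
          3 / 2 * ((1 + η) * ((1 - p) ^ (3 * k) * Fintype.card V)) +
          3 / 2 * ((1 + η) * ((1 - p) ^ (3 * k) * (1 - p) ^ 3 * Fintype.card V)) := by
        generalize (1 - p) ^ 3 = Q at hd ⊢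
        field_simp
        ring
      rw [key]
      linarith
  obtain ⟨H, hH, hc⟩ := main K 0 (by omega) ∅ (by simp)
  have hu : nbhd G ∅ ∅ = Finset.univ := by
    ext x; simp [mem_nbhd]
  rw [hu] at hH
  have h1 : (satNum G (cycGraph 4) : ℝ) ≤ H.edgeSet.ncard := by exact_mod_cast satNum_le G H hH
  simp only [mul_zero, pow_zero, one_mul] at hc
  linarith

/-! ### Concentration -/

theorem mgf_count {Ω V : Type*} [MeasurableSpace Ω] [Finite Ω] [DiscreteMeasurableSpace Ω]
    [DecidableEq V] (μ : Measure Ω) [IsProbabilityMeasure μ] (U : Finset V) (good : V → Set Ω)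
    (X : Ω → ℝ)
    (hX : ∀ ω, ∃ W ⊆ U, (∀ x ∈ U, x ∈ W ↔ ω ∈ good x) ∧ X ω = W.card)
    (r : ℝ) (h : ∀ W ⊆ U, μ.real (⋂ x ∈ W, good x) = r ^ W.card) (t : ℝ) :
    ProbabilityTheory.mgf X μ t = (1 + (exp t - 1) * r) ^ U.card := by
  classical
  have h1 : ∀ ω, exp (t * X ω) =
      ∑ W ∈ U.powerset, (exp t - 1) ^ W.card * (⋂ x ∈ W, good x).indicator (fun _ => (1 : ℝ)) ω := by
    intro ω
    obtain ⟨W0, hW0, hW1, e⟩ := hX ω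
    have h2 : exp (t * X ω) = ∏ x ∈ U, (1 + (exp t - 1) * (good x).indicator (fun _ => (1 : ℝ)) ω) := by
      have : ∀ x ∈ U, (1 + (exp t - 1) * (good x).indicator (fun _ => (1 : ℝ)) ω) =
          if x ∈ W0 then exp t else 1 := by
        intro x hx
        by_cases hg : x ∈ W0
        · rw [if_pos hg, Set.indicator_of_mem ((hW1 x hx).1 hg)]; ring
        · rw [if_neg hg, Set.indicator_of_notMem (fun h' => hg ((hW1 x hx).2 h'))]; ring
      rw [Finset.prod_congr rfl this, Finset.prod_ite_mem, Finset.inter_eq_right.2 hW0,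
        Finset.prod_const, e, mul_comm, Real.exp_nat_mul]
    rw [h2, Finset.prod_one_add]
    refine Finset.sum_congr rfl fun W hW => ?_
    rw [Finset.prod_mul_distrib, Finset.prod_const]
    congr 1
    by_cases hm : ω ∈ ⋂ x ∈ W, good x
    · rw [Set.indicator_of_mem hm]
      apply Finset.prod_eq_one
      intro x hx
      rw [Set.indicator_of_mem]
      exact Set.mem_iInter₂.1 hm x hx
    · rw [Set.indicator_of_notMem hm]
      rw [Set.mem_iInter₂] at hm
      push Not at hm
      obtain ⟨x, hx, hx'⟩ := hm
      exact Finset.prod_eq_zero hx (Set.indicator_of_notMem hx' _)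
  rw [ProbabilityTheory.mgf]
  simp_rw [h1]
  rw [integral_finset_sum _ (fun W _ => Integrable.of_finite)]
  have h3 : ∀ W ∈ U.powerset, ∫ ω, (exp t - 1) ^ W.card *
      (⋂ x ∈ W, good x).indicator (fun _ => (1 : ℝ)) ω ∂μ = ∏ _x ∈ W, ((exp t - 1) * r) := by
    intro W hW
    rw [integral_const_mul, integral_indicator_const _ (MeasurableSet.of_discrete),
      h W (Finset.mem_powerset.1 hW), Finset.prod_const, mul_pow]
    simp
  rw [Finset.sum_congr rfl h3, ← Finset.prod_one_add, Finset.prod_const]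

theorem chernoff {Ω V : Type*} [MeasurableSpace Ω] [Finite Ω] [DiscreteMeasurableSpace Ω]
    [DecidableEq V] (μ : Measure Ω) [IsProbabilityMeasure μ] (U : Finset V) (good : V → Set Ω)
    (X : Ω → ℝ)
    (hX : ∀ ω, ∃ W ⊆ U, (∀ x ∈ U, x ∈ W ↔ ω ∈ good x) ∧ X ω = W.card)
    (r : ℝ) (hr0 : 0 ≤ r) (hr1 : r ≤ 1)
    (h : ∀ W ⊆ U, μ.real (⋂ x ∈ W, good x) = r ^ W.card) (η : ℝ) (hη0 : 0 < η) (hη1 : η ≤ 1) :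
    μ.real {ω | η * (r * U.card) < |X ω - r * U.card|} ≤
      2 * exp (-(η ^ 2 / 4 * (r * U.card))) := by
  have hb : ∀ t, |t| ≤ 1 → ProbabilityTheory.mgf X μ t ≤ exp (r * U.card * (t + t ^ 2)) := by
    intro t ht
    rw [mgf_count μ U good X hX r h t]
    have h1 := (abs_le.1 (Real.abs_exp_sub_one_sub_id_le ht)).2
    have h2 : 1 + (exp t - 1) * r ≤ exp (r * (t + t ^ 2)) := by
      have := Real.add_one_le_exp (r * (t + t ^ 2))
      nlinarith
    have h3 : 0 ≤ 1 + (exp t - 1) * r := by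
      have := Real.exp_pos t
      nlinarith
    calc (1 + (exp t - 1) * r) ^ U.card ≤ exp (r * (t + t ^ 2)) ^ U.card :=
          pow_le_pow_left₀ h3 h2 _
      _ = _ := by rw [← Real.exp_nat_mul]; congr 1; ring
  have hu := ProbabilityTheory.measure_ge_le_exp_mul_mgf (μ := μ) (X := X) (t := η / 2)
    ((1 + η) * (r * U.card)) (by positivity) Integrable.of_finite
  have hl := ProbabilityTheory.measure_le_le_exp_mul_mgf (μ := μ) (X := X) (t := -(η / 2))
    ((1 - η) * (r * U.card)) (by linarith) Integrable.of_finite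
  have hu' := hu.trans (mul_le_mul_of_nonneg_left (hb (η / 2)
    (by rw [abs_of_pos (by positivity)]; linarith)) (Real.exp_pos _).le)
  have hl' := hl.trans (mul_le_mul_of_nonneg_left (hb (-(η / 2))
    (by rw [abs_neg, abs_of_pos (by positivity)]; linarith)) (Real.exp_pos _).le)
  rw [← Real.exp_add] at hu' hl'
  have hsub : {ω | η * (r * U.card) < |X ω - r * U.card|} ⊆
      {ω | (1 + η) * (r * U.card) ≤ X ω} ∪ {ω | X ω ≤ (1 - η) * (r * U.card)} := by
    intro ω hω
    simp only [Set.mem_setOf_eq] at hω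
    rcases lt_abs.1 hω with h' | h'
    · left; simp only [Set.mem_setOf_eq]; linarith
    · right; simp only [Set.mem_setOf_eq]; linarith
  refine (measureReal_mono hsub).trans ((measureReal_union_le _ _).trans ?_)
  have e1 : -(η / 2) * ((1 + η) * (r * U.card)) + r * U.card * (η / 2 + (η / 2) ^ 2) =
      -(η ^ 2 / 4 * (r * U.card)) := by ring
  have e2 : - -(η / 2) * ((1 - η) * (r * U.card)) + r * U.card * (-(η / 2) + (-(η / 2)) ^ 2) =
      -(η ^ 2 / 4 * (r * U.card)) := by ring
  rw [e1] at hu'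
  rw [e2] at hl'
  linarith

/-! ### The random graph -/

instance erMeasure_prob (n : ℕ) (p : ℝ) : IsProbabilityMeasure (erMeasure n p) := by
  unfold erMeasure
  infer_instance

theorem er_cylinder {n : ℕ} {p : ℝ} (hp0 : 0 ≤ p) (hp1 : p ≤ 1) (E1 E0 : Finset (EdgeType n))
    (hd : Disjoint E1 E0) :
    (erMeasure n p).real {ω | (∀ e ∈ E1, ω e = true) ∧ ∀ e ∈ E0, ω e = false} =
      p ^ E1.card * (1 - p) ^ E0.card := by
  classical
  have hbox : {ω : EdgeType n → Bool | (∀ e ∈ E1, ω e = true) ∧ ∀ e ∈ E0, ω e = false} =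
      Set.pi Set.univ (fun e => if e ∈ E1 then {true} else if e ∈ E0 then {false} else Set.univ) := by
    ext ω
    constructor
    · rintro ⟨h1, h0⟩ e -
      by_cases he : e ∈ E1
      · simp [he, h1 e he]
      · by_cases he0 : e ∈ E0
        · simp [he, he0, h0 e he0]
        · simp [he, he0]
    · intro h
      refine ⟨fun e he => ?_, fun e he => ?_⟩
      · have := h e (Set.mem_univ _)
        simpa [he] using this
      · have := h e (Set.mem_univ _)
        have he' : e ∉ E1 := fun h' => (Finset.disjoint_left.1 hd h' he)
        simpa [he, he'] using this
  have hm : min (Real.toNNReal p) 1 = Real.toNNReal p := by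
    apply min_eq_left
    rw [Real.toNNReal_le_one]; exact hp1
  rw [hbox, Measure.real, erMeasure, Measure.pi_pi, ENNReal.toReal_prod]
  have h2 : ∀ e ∈ (Finset.univ : Finset (EdgeType n)),
      ((PMF.bernoulli (min (Real.toNNReal p) 1) (min_le_right _ _)).toMeasure
        (if e ∈ E1 then {true} else if e ∈ E0 then {false} else Set.univ)).toReal =
      (if e ∈ E1 then p else 1) * (if e ∈ E0 then 1 - p else 1) := by
    intro e _
    by_cases he : e ∈ E1
    · have he0 : e ∉ E0 := Finset.disjoint_left.1 hd he
      rw [if_pos he, if_pos he, if_neg he0, PMF.toMeasure_apply_singleton _ _ (measurableSet_singleton _)]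
      simp [PMF.bernoulli_apply, hm, hp0]
    · by_cases he0 : e ∈ E0
      · rw [if_neg he, if_neg he, if_pos he0, if_pos he0, PMF.toMeasure_apply_singleton _ _ (measurableSet_singleton _)]
        simp only [PMF.bernoulli_apply, hm, cond_false, mul_one, one_mul]
        rw [ENNReal.coe_toReal, NNReal.coe_sub (by rw [Real.toNNReal_le_one]; exact hp1)]
        simp [hp0]
      · rw [if_neg he, if_neg he, if_neg he0, if_neg he0, measure_univ]
        simp
  rw [Finset.prod_congr rfl h2, Finset.prod_mul_distrib, Finset.prod_ite_mem, Finset.prod_ite_mem]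
  simp

/-- The edges between two sets. -/
noncomputable def crossE {n : ℕ} (W A : Finset (Fin n)) : Finset (EdgeType n) := by
  classical
  exact Finset.univ.filter fun e => ∃ x ∈ W, ∃ a ∈ A, e.1 = s(x, a)

theorem mem_crossE {n : ℕ} {W A : Finset (Fin n)} {e : EdgeType n} :
    e ∈ crossE W A ↔ ∃ x ∈ W, ∃ a ∈ A, e.1 = s(x, a) := by
  simp [crossE]

theorem card_crossE {n : ℕ} {W A : Finset (Fin n)} (hd : Disjoint W A) :
    (crossE W A).card = W.card * A.card := by
  classical
  rw [← Finset.card_product]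
  symm
  have hne : ∀ q ∈ W ×ˢ A, ¬ (s(q.1, q.2)).IsDiag := by
    intro q hq
    rw [Finset.mem_product] at hq
    rw [Sym2.mk_isDiag_iff]
    intro h
    exact Finset.disjoint_left.1 hd hq.1 (h ▸ hq.2)
  refine Finset.card_bij (fun q hq => ⟨s(q.1, q.2), hne q hq⟩) ?_ ?_ ?_
  · intro q hq
    rw [Finset.mem_product] at hq
    exact mem_crossE.2 ⟨q.1, hq.1, q.2, hq.2, rfl⟩
  · rintro ⟨a, b⟩ h1 ⟨c, d⟩ h2 h
    rw [Finset.mem_product] at h1 h2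
    simp only [Subtype.mk.injEq, Sym2.eq_iff] at h
    rcases h with ⟨rfl, rfl⟩ | ⟨rfl, rfl⟩
    · rfl
    · exact absurd h2.2 (Finset.disjoint_left.1 hd h1.1)
  · intro e he
    obtain ⟨x, hx, a, ha, h⟩ := mem_crossE.1 he
    exact ⟨(x, a), Finset.mem_product.2 ⟨hx, ha⟩, Subtype.ext h.symm⟩

theorem graphOf_adj {n : ℕ} {ω : EdgeType n → Bool} {x a : Fin n} (h : ¬ (s(x, a)).IsDiag) :
    (graphOf ω).Adj x a ↔ ω ⟨s(x, a), h⟩ = true := by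
  have : x ≠ a := by simpa using h
  unfold graphOf
  rw [SimpleGraph.fromEdgeSet_adj]
  constructor
  · rintro ⟨⟨_, h'⟩, _⟩; exact h'
  · intro h'; exact ⟨⟨h, h'⟩, this⟩

theorem typical_one {n : ℕ} {p : ℝ} (hp0 : 0 < p) (hp1 : p < 1) (A T : Finset (Fin n))
    (hd : Disjoint A T) (η : ℝ) (hη0 : 0 < η) (hη1 : η ≤ 1) :
    (erMeasure n p).real {ω | η * (p ^ A.card * (1 - p) ^ T.card * ((A ∪ T)ᶜ.card : ℝ)) <
      |((nbhd (graphOf ω) A T).card : ℝ) - p ^ A.card * (1 - p) ^ T.card * ((A ∪ T)ᶜ.card : ℝ)|} ≤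
      2 * exp (-(η ^ 2 / 4 * (p ^ A.card * (1 - p) ^ T.card * ((A ∪ T)ᶜ.card : ℝ)))) := by
  classical
  have hq0 : 0 < 1 - p := by linarith
  refine chernoff (erMeasure n p) ((A ∪ T)ᶜ)
    (fun x => {ω | (∀ a ∈ A, (graphOf ω).Adj x a) ∧ ∀ b ∈ T, ¬ (graphOf ω).Adj x b})
    (fun ω => ((nbhd (graphOf ω) A T).card : ℝ)) ?_ (p ^ A.card * (1 - p) ^ T.card)
    (by positivity)
    (mul_le_one₀ (pow_le_one₀ hp0.le hp1.le) (by positivity) (pow_le_one₀ hq0.le (by linarith)))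
    ?_ η hη0 hη1
  · intro ω
    refine ⟨nbhd (graphOf ω) A T, ?_, ?_, rfl⟩
    · intro x hx
      rw [mem_nbhd] at hx
      simp only [Finset.mem_compl, Finset.mem_union, not_or]
      exact ⟨fun h => (hx.2.1 x h).ne rfl, hx.1⟩
    · intro x hx
      simp only [Finset.mem_compl, Finset.mem_union, not_or] at hx
      rw [mem_nbhd]
      exact ⟨fun h => h.2, fun h => ⟨hx.2, h⟩⟩
  · intro W hW
    have hWA : Disjoint W A := Finset.disjoint_left.2 fun x hx ha => by
      have := hW hx
      simp [ha] at this
    have hWT : Disjoint W T := Finset.disjoint_left.2 fun x hx ha => by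
      have := hW hx
      simp [ha] at this
    have hE : Disjoint (crossE W A) (crossE W T) := by
      rw [Finset.disjoint_left]
      intro e he he'
      obtain ⟨x, hx, a, ha, h⟩ := mem_crossE.1 he
      obtain ⟨y, hy, b, hb, h'⟩ := mem_crossE.1 he'
      rw [h, Sym2.eq_iff] at h'
      rcases h' with ⟨rfl, rfl⟩ | ⟨rfl, rfl⟩
      · exact Finset.disjoint_left.1 hd ha hb
      · exact Finset.disjoint_left.1 hWT hx hb
    have hev : (⋂ x ∈ W, {ω : EdgeType n → Bool | (∀ a ∈ A, (graphOf ω).Adj x a) ∧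
        ∀ b ∈ T, ¬ (graphOf ω).Adj x b}) =
        {ω | (∀ e ∈ crossE W A, ω e = true) ∧ ∀ e ∈ crossE W T, ω e = false} := by
      ext ω
      rw [Set.mem_iInter₂]
      have hdg : ∀ {B : Finset (Fin n)}, Disjoint W B → ∀ x ∈ W, ∀ a ∈ B, ¬ (s(x, a)).IsDiag := by
        intro B hB x hx a ha
        rw [Sym2.mk_isDiag_iff]
        intro h
        exact Finset.disjoint_left.1 hB hx (h ▸ ha)
      constructor
      · intro h
        refine ⟨?_, ?_⟩
        · rintro ⟨e, he0⟩ he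
          obtain ⟨x, hx, a, ha, h'⟩ := mem_crossE.1 he
          simp only at h'
          subst h'
          exact (graphOf_adj he0).1 ((h x hx).1 a ha)
        · rintro ⟨e, he0⟩ he
          obtain ⟨x, hx, a, ha, h'⟩ := mem_crossE.1 he
          simp only at h'
          subst h'
          have := (h x hx).2 a ha
          rw [graphOf_adj he0] at this
          simpa using this
      · rintro ⟨h1, h0⟩ x hx
        refine ⟨fun a ha => ?_, fun b hb => ?_⟩
        · rw [graphOf_adj (hdg hWA x hx a ha)]
          exact h1 _ (mem_crossE.2 ⟨x, hx, a, ha, rfl⟩)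
        · rw [graphOf_adj (hdg hWT x hx b hb), h0 _ (mem_crossE.2 ⟨x, hx, b, hb, rfl⟩)]
          simp
    rw [hev, er_cylinder hp0.le hp1.le _ _ hE, card_crossE hWA, card_crossE hWT]
    rw [mul_pow, ← pow_mul, ← pow_mul, mul_comm W.card, mul_comm W.card]

theorem card_small_sets (n m : ℕ) :
    (Finset.univ.filter fun A : Finset (Fin n) => A.card ≤ m).card ≤ (n + 1) ^ m := by
  classical
  induction m with
  | zero =>
    have : (Finset.univ.filter fun A : Finset (Fin n) => A.card ≤ 0) = {∅} := by
      ext A; simp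
    rw [this]; simp
  | succ m ih =>
    have hsub : (Finset.univ.filter fun A : Finset (Fin n) => A.card ≤ m + 1) ⊆
        ((Finset.univ : Finset (Option (Fin n))) ×ˢ
          (Finset.univ.filter fun A : Finset (Fin n) => A.card ≤ m)).image
          (fun q => q.1.elim q.2 (fun a => insert a q.2)) := by
      intro A hA
      rw [Finset.mem_filter] at hA
      rw [Finset.mem_image]
      rcases A.eq_empty_or_nonempty with h | ⟨a, ha⟩
      · exact ⟨(none, A), by simp [h], rfl⟩
      · refine ⟨(some a, A.erase a), ?_, ?_⟩
        · have := Finset.card_erase_of_mem ha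
          simp only [Finset.mem_product, Finset.mem_univ, Finset.mem_filter, true_and]
          omega
        · simp [Finset.insert_erase ha]
    refine (Finset.card_le_card hsub).trans (Finset.card_image_le.trans ?_)
    rw [Finset.card_product, pow_succ, mul_comm]
    refine Nat.mul_le_mul ih ?_
    simp

theorem typical_all {n : ℕ} {p : ℝ} (hp0 : 0 < p) (hp1 : p < 1) (η : ℝ) (hη0 : 0 < η)
    (hη1 : η ≤ 1) (τ : ℕ) (hn : (τ : ℝ) + 3 ≤ η / 2 * n) :
    (erMeasure n p).real {ω | ¬ Typical (graphOf ω) p η τ} ≤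
      ((n : ℝ) + 1) ^ (τ + 3) * (2 * exp (-(η ^ 2 / 32 * (p ^ 3 * (1 - p) ^ τ * n)))) := by
  classical
  have hq0 : 0 < 1 - p := by linarith
  have hq1 : 1 - p ≤ 1 := by linarith
  have hn0 : (0 : ℝ) ≤ n := Nat.cast_nonneg n
  set S3 := (Finset.univ.filter fun A : Finset (Fin n) => A.card ≤ 3) with hS3
  set Sτ := (Finset.univ.filter fun A : Finset (Fin n) => A.card ≤ τ) with hSτ
  set P := (S3 ×ˢ Sτ).filter (fun q => Disjoint q.1 q.2) with hP
  let bad : Finset (Fin n) × Finset (Fin n) → Set (EdgeType n → Bool) := fun q =>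
    {ω | (η / 2) * (p ^ q.1.card * (1 - p) ^ q.2.card * ((q.1 ∪ q.2)ᶜ.card : ℝ)) <
      |((nbhd (graphOf ω) q.1 q.2).card : ℝ) -
        p ^ q.1.card * (1 - p) ^ q.2.card * ((q.1 ∪ q.2)ᶜ.card : ℝ)|}
  have hu : ∀ A T : Finset (Fin n), A.card ≤ 3 → T.card ≤ τ →
      (1 - η / 2) * n ≤ ((A ∪ T)ᶜ.card : ℝ) ∧ ((A ∪ T)ᶜ.card : ℝ) ≤ n := by
    intro A T hA hT
    have h1 := Finset.card_union_le A T
    have h2 : (A ∪ T)ᶜ.card + (A ∪ T).card = n := by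
      rw [add_comm, Finset.card_add_card_compl, Fintype.card_fin]
    have h3 : n ≤ (A ∪ T)ᶜ.card + (τ + 3) := by omega
    have h4 : (A ∪ T)ᶜ.card ≤ n := by omega
    have h3' : (n : ℝ) ≤ ((A ∪ T)ᶜ.card : ℝ) + ((τ : ℝ) + 3) := by exact_mod_cast h3
    have h4' : ((A ∪ T)ᶜ.card : ℝ) ≤ n := by exact_mod_cast h4
    exact ⟨by linarith, h4'⟩
  have hsub : {ω : EdgeType n → Bool | ¬ Typical (graphOf ω) p η τ} ⊆ ⋃ q ∈ P, bad q := by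
    intro ω hω
    by_contra hcon
    apply hω
    intro A T hd hA hT
    have hmem : (A, T) ∈ P := by simp [hP, hS3, hSτ, hd, hA, hT]
    have hnb : ω ∉ bad (A, T) := fun h => hcon (Set.mem_iUnion₂.2 ⟨_, hmem, h⟩)
    have hnb' : |((nbhd (graphOf ω) A T).card : ℝ) -
        p ^ A.card * (1 - p) ^ T.card * ((A ∪ T)ᶜ.card : ℝ)| ≤
        (η / 2) * (p ^ A.card * (1 - p) ^ T.card * ((A ∪ T)ᶜ.card : ℝ)) := not_lt.1 hnb
    obtain ⟨u1, u2⟩ := hu A T hA hT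
    have hr : 0 < p ^ A.card * (1 - p) ^ T.card := by positivity
    rw [Fintype.card_fin]
    generalize p ^ A.card * (1 - p) ^ T.card = r at *
    rw [abs_le] at hnb' ⊢
    have k1 := mul_le_mul_of_nonneg_left u1 hr.le
    have k2 := mul_le_mul_of_nonneg_left u2 hr.le
    have k3 := mul_le_mul_of_nonneg_left k2 hη0.le
    constructor <;> nlinarith [hnb'.1, hnb'.2]
  have hb : ∀ q ∈ P, (erMeasure n p).real (bad q) ≤
      2 * exp (-(η ^ 2 / 32 * (p ^ 3 * (1 - p) ^ τ * n))) := by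
    rintro ⟨A, T⟩ hq
    simp only [hP, hS3, hSτ, Finset.mem_filter, Finset.mem_product, Finset.mem_univ, true_and] at hq
    obtain ⟨⟨hA, hT⟩, hd⟩ := hq
    refine (typical_one hp0 hp1 A T hd (η / 2) (by positivity) (by linarith)).trans ?_
    obtain ⟨u1, u2⟩ := hu A T hA hT
    have r1 : p ^ 3 ≤ p ^ A.card := pow_le_pow_of_le_one hp0.le hp1.le hA
    have r2 : (1 - p) ^ τ ≤ (1 - p) ^ T.card := pow_le_pow_of_le_one hq0.le hq1 hT
    have u3 : (n : ℝ) / 2 ≤ ((A ∪ T)ᶜ.card : ℝ) := by nlinarith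
    have k : p ^ 3 * (1 - p) ^ τ * ((n : ℝ) / 2) ≤
        p ^ A.card * (1 - p) ^ T.card * ((A ∪ T)ᶜ.card : ℝ) := by gcongr
    have k2 := mul_le_mul_of_nonneg_left k (by positivity : 0 ≤ η ^ 2 / 16)
    have : -((η / 2) ^ 2 / 4 * (p ^ A.card * (1 - p) ^ T.card * ((A ∪ T)ᶜ.card : ℝ))) ≤
        -(η ^ 2 / 32 * (p ^ 3 * (1 - p) ^ τ * n)) := by
      linarith
    have := Real.exp_le_exp.2 this
    linarith
  have hcard : (P.card : ℝ) ≤ ((n : ℝ) + 1) ^ (τ + 3) := by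
    have : P.card ≤ (n + 1) ^ (τ + 3) := by
      refine (Finset.card_filter_le _ _).trans ?_
      rw [Finset.card_product, add_comm τ 3, pow_add]
      exact Nat.mul_le_mul (card_small_sets n 3) (card_small_sets n τ)
    exact_mod_cast this
  calc (erMeasure n p).real {ω | ¬ Typical (graphOf ω) p η τ}
      ≤ (erMeasure n p).real (⋃ q ∈ P, bad q) := measureReal_mono hsub (measure_ne_top _ _)
    _ ≤ ∑ q ∈ P, (erMeasure n p).real (bad q) := measureReal_biUnion_finset_le _ _
    _ ≤ ∑ _q ∈ P, 2 * exp (-(η ^ 2 / 32 * (p ^ 3 * (1 - p) ^ τ * n))) := Finset.sum_le_sum hb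
    _ = P.card * (2 * exp (-(η ^ 2 / 32 * (p ^ 3 * (1 - p) ^ τ * n)))) := by
      rw [Finset.sum_const, nsmul_eq_mul]
    _ ≤ _ := by gcongr

set_option maxHeartbeats 2000000 in
/-- The quantitative form: with `n = y ^ 10` and `y` large, failure has probability
at most `2 exp (-y)`. -/
theorem quant {n : ℕ} {p ε η : ℝ} {j : ℕ} (hp0 : 0 < p) (hp1 : p < 1)
    (hQ : (1 - p) ^ 3 < 1 / 7) (hε : 0 < ε)
    (hη0 : 0 < η) (hη1 : η ≤ 1 / 2) (hηε : η ≤ ε / 2) (hηQ : η ≤ (1 - 7 * (1 - p) ^ 3) / 100)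
    (hj : (1 - p) ^ j ≤ (1 - 7 * (1 - p) ^ 3) / 100) {y : ℝ} (hyn : y ^ 10 = n) (hy2 : 2 ≤ y)
    (hyε : 8 / ε ≤ y) (hy3 : 2 * (24 + j) / η ≤ y)
    (hy4 : 2 * j / ((1 - η) * (p ^ 2 * (1 - p)) * (1 - p) ^ 3) ≤ y)
    (hy5 : 1 / ((1 - 7 * (1 - p) ^ 3) / 4 * (1 - p) ^ 3) ≤ y)
    (hy6 : (11 * (24 + j) + 1) / (η ^ 2 / 32 * (p ^ 3 * ((1 - p) ^ 3 * (1 - p) ^ j))) ≤ y) :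
    1 - 2 * exp (-y) ≤ (erMeasure n p).real {ω |
        (satNum (graphOf ω) (cycGraph 4) : ℝ)
          ≤ (3 * (1 + (1 - p) ^ 3) / (2 * (1 - (1 - p) ^ 3))) * n * (1 + ε)} := by
  have hq0 : 0 < 1 - p := by linarith
  have hy0 : 0 < y := by linarith
  have hy1 : 1 ≤ y := by linarith
  set Q := (1 - p) ^ 3 with hQdef
  have hQ0 : 0 < Q := by positivity
  have hj0 : (0 : ℝ) ≤ j := Nat.cast_nonneg j
  have hQj : 0 < (1 - p) ^ j := by positivity
  -- powers of y
  have hpow : ∀ m : ℕ, 1 ≤ m → y ≤ y ^ m := fun m hm => by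
    simpa using pow_le_pow_right₀ hy1 hm
  obtain ⟨k, hk1, hk2⟩ := exists_nat_pow_near_of_lt_one (x := (y ^ 6)⁻¹) (y := Q) (by positivity)
    (inv_le_one_of_one_le₀ (one_le_pow₀ hy1)) hQ0 (by linarith)
  -- hk1 : Q ^ (k+1) < (y^6)⁻¹, hk2 : (y^6)⁻¹ ≤ Q ^ k
  have hlogy : y ≤ exp y := by have := Real.add_one_le_exp y; linarith
  have hk : (k : ℝ) ≤ 6 * y := by
    have hQe : Q ≤ exp (-1) := by
      rw [Real.exp_neg]
      have h3 := Real.exp_one_lt_d9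
      have : (7 : ℝ)⁻¹ ≤ (exp 1)⁻¹ := inv_anti₀ (Real.exp_pos _) (by linarith)
      norm_num at this hQ ⊢
      linarith
    have h1 : (exp (6 * y))⁻¹ ≤ exp (-(k : ℝ)) := by
      calc (exp (6 * y))⁻¹ ≤ (y ^ 6)⁻¹ := by
            apply inv_anti₀ (by positivity)
            calc y ^ 6 ≤ exp y ^ 6 := pow_le_pow_left₀ hy0.le hlogy 6
              _ = exp (6 * y) := by rw [← Real.exp_nat_mul]; norm_num
        _ ≤ Q ^ k := hk2
        _ ≤ exp (-1) ^ k := pow_le_pow_left₀ hQ0.le hQe k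
        _ = exp (-(k : ℝ)) := by rw [← Real.exp_nat_mul]; congr 1; ring
    rw [← Real.exp_neg, Real.exp_le_exp] at h1
    linarith
  have hQK1 : Q ^ (k + 1) * n ≤ y ^ 4 := by
    rw [← hyn]
    calc Q ^ (k + 1) * y ^ 10 ≤ (y ^ 6)⁻¹ * y ^ 10 := by gcongr
      _ = y ^ 4 := by field_simp
  have hQK2 : Q * y ^ 4 ≤ Q ^ (k + 1) * n := by
    rw [← hyn]
    calc Q * y ^ 4 = Q * (y ^ 6)⁻¹ * y ^ 10 := by field_simp
      _ ≤ Q * Q ^ k * y ^ 10 := by gcongr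
      _ = _ := by ring
  have hQK : (1 - p) ^ (3 * (k + 1)) = Q ^ (k + 1) := by rw [pow_mul]
  -- number of vertices
  set τ := 3 * (k + 1) + j with hτ
  have hτb : (τ : ℝ) + 3 ≤ (24 + j) * y := by
    rw [hτ]; push_cast; nlinarith
  have hn : (τ : ℝ) + 3 ≤ η / 2 * n := by
    rw [← hyn]
    rw [div_le_iff₀ hη0] at hy3
    have h2 : y ^ 2 ≤ y ^ 10 := pow_le_pow_right₀ hy1 (by norm_num)
    have h3 : η / 2 * y ^ 2 ≤ η / 2 * y ^ 10 := by gcongr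
    nlinarith
  have hbad := typical_all hp0 hp1 η hη0 (by linarith) τ hn
  -- the failure probability
  have hfail : ((n : ℝ) + 1) ^ (τ + 3) * (2 * exp (-(η ^ 2 / 32 * (p ^ 3 * (1 - p) ^ τ * n)))) ≤
      2 * exp (-y) := by
    have h1 : (n : ℝ) + 1 ≤ exp (11 * y) := by
      calc (n : ℝ) + 1 ≤ y ^ 10 + y ^ 10 := by rw [hyn]; linarith [hpow 10 (by norm_num)]
        _ ≤ y ^ 11 := by
          have : 0 < y ^ 10 := by positivity
          rw [pow_succ y 10]; nlinarith
        _ ≤ exp y ^ 11 := pow_le_pow_left₀ hy0.le hlogy 11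
        _ = exp (11 * y) := by rw [← Real.exp_nat_mul]; norm_num
    have h2 : ((n : ℝ) + 1) ^ (τ + 3) ≤ exp (11 * y * ((24 + j) * y)) := by
      calc ((n : ℝ) + 1) ^ (τ + 3) ≤ exp (11 * y) ^ (τ + 3) := pow_le_pow_left₀ (by positivity) h1 _
        _ = exp (11 * y * ((τ : ℝ) + 3)) := by
          rw [← Real.exp_nat_mul]; congr 1; push_cast; ring
        _ ≤ _ := Real.exp_le_exp.2 (by gcongr)
    set c := η ^ 2 / 32 * (p ^ 3 * (Q * (1 - p) ^ j)) with hc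
    have hc0 : 0 < c := by positivity
    have h3 : c * y ^ 4 ≤ η ^ 2 / 32 * (p ^ 3 * (1 - p) ^ τ * n) := by
      rw [hc, hτ, pow_add, hQK]
      have := mul_le_mul_of_nonneg_left hQK2 (by positivity : 0 ≤ η ^ 2 / 32 * (p ^ 3 * (1 - p) ^ j))
      linarith
    rw [div_le_iff₀ hc0] at hy6
    have h4 : 11 * y * ((24 + j) * y) + y ≤ c * y ^ 4 := by
      have e1 : (11 * (24 + (j : ℝ)) + 1) * y ^ 2 ≤ y * c * y ^ 2 := by gcongr
      have e2 : y * c * y ^ 2 ≤ c * y ^ 4 := by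
        have : y ^ 3 ≤ y ^ 4 := pow_le_pow_right₀ hy1 (by norm_num)
        have := mul_le_mul_of_nonneg_left this hc0.le
        linarith
      linarith [hpow 2 (by norm_num)]
    calc ((n : ℝ) + 1) ^ (τ + 3) * (2 * exp (-(η ^ 2 / 32 * (p ^ 3 * (1 - p) ^ τ * n))))
        ≤ exp (11 * y * ((24 + j) * y)) * (2 * exp (-(c * y ^ 4))) := by gcongr
      _ = 2 * exp (11 * y * ((24 + j) * y) + -(c * y ^ 4)) := by rw [Real.exp_add]; ring
      _ ≤ 2 * exp (-y) := by
        have := Real.exp_le_exp.2 (by linarith : 11 * y * ((24 + j) * y) + -(c * y ^ 4) ≤ -y)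
        linarith
  -- deterministic part
  have hdet : ∀ ω : EdgeType n → Bool, Typical (graphOf ω) p η τ →
      (satNum (graphOf ω) (cycGraph 4) : ℝ)
          ≤ (3 * (1 + Q) / (2 * (1 - Q))) * n * (1 + ε) := by
    intro ω hT
    have hy4' : y ≤ y ^ 4 := hpow 4 (by norm_num)
    have hsb := sat_bound (graphOf ω) (p := p) (η := η) (κ := (1 - 7 * Q) / 4) (K := k + 1) (j := j)
      hp0 hp1 hη0 (by linarith) hT ?_ (by linarith) ?_ ?_
    · rw [Fintype.card_fin, hQK] at hsb
      refine hsb.trans ?_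
      have hB : 1 ≤ 3 * (1 + Q) / (2 * (1 - Q)) := by
        rw [le_div_iff₀ (by linarith)]; linarith
      set B := 3 * (1 + Q) / (2 * (1 - Q)) with hBdef
      have hn0 : (0 : ℝ) ≤ n := Nat.cast_nonneg n
      have h1 : ((1 + η) * (Q ^ (k + 1) * n)) ^ 2 ≤ (2 * y ^ 4) ^ 2 := by
        apply pow_le_pow_left₀ (by positivity)
        exact mul_le_mul (by linarith) hQK1 (by positivity) (by norm_num)
      have h2 : (2 * y ^ 4) ^ 2 ≤ ε / 2 * n := by
        rw [div_le_iff₀ hε] at hyε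
        rw [← hyn]
        have : 4 ≤ ε / 2 * y ^ 2 := by nlinarith
        have := mul_le_mul_of_nonneg_right this (by positivity : 0 ≤ y ^ 8)
        nlinarith
      have h3 : ε / 2 * n ≤ ε / 2 * (B * n) := by
        have : (n : ℝ) ≤ B * n := by nlinarith
        gcongr
      have h4 : η * (B * n) ≤ ε / 2 * (B * n) := by
        have : 0 ≤ B * n := by positivity
        gcongr
      linarith
    · have e : (1 - η) * (p * (1 - p)) + (1 - η) * p ^ 3 / 3 = (1 - η) * ((1 - Q) / 3) := by
        rw [hQdef]; ring
      rw [e, ← hQdef]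
      have e1 : η * (1 - p) ^ j ≤ 1 * (1 - p) ^ j := by gcongr; linarith
      have e2 : η * Q ≤ η * 1 := by gcongr; linarith
      nlinarith
    · rw [Fintype.card_fin, hQK]
      have hpos : 0 < (1 - η) * (p ^ 2 * (1 - p)) := by
        have : 0 < 1 - η := by linarith
        positivity
      rw [div_le_iff₀ (by positivity)] at hy4
      have := mul_le_mul_of_nonneg_left hQK2 hpos.le
      have h' := mul_le_mul_of_nonneg_left hy4' (by positivity : 0 ≤ (1 - η) * (p ^ 2 * (1 - p)) * Q)
      linarith
    · rw [Fintype.card_fin, hQK]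
      have hpos : 0 < (1 - 7 * Q) / 4 := by linarith
      rw [div_le_iff₀ (by positivity)] at hy5
      have := mul_le_mul_of_nonneg_left hQK2 hpos.le
      have h' := mul_le_mul_of_nonneg_left hy4' (by positivity : 0 ≤ (1 - 7 * Q) / 4 * Q)
      linarith
  have hc := probReal_compl_eq_one_sub (μ := erMeasure n p)
    (s := {ω | ¬ Typical (graphOf ω) p η τ}) MeasurableSet.of_discrete
  have hmono : (erMeasure n p).real {ω | ¬ Typical (graphOf ω) p η τ}ᶜ ≤
      (erMeasure n p).real {ω | (satNum (graphOf ω) (cycGraph 4) : ℝ)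
          ≤ (3 * (1 + Q) / (2 * (1 - Q))) * n * (1 + ε)} := by
    refine measureReal_mono (fun ω hω => hdet ω (not_not.1 hω)) (measure_ne_top _ _)
  linarith

theorem cube_lt {p : ℝ} (hp1 : p < 1) (hp : 1 - 1 / (7 : ℝ) ^ ((1 : ℝ) / 3) < p) :
    (1 - p) ^ 3 < 1 / 7 := by
  have h : 1 - p < 1 / (7 : ℝ) ^ ((1 : ℝ) / 3) := by linarith
  have := pow_lt_pow_left₀ h (by linarith) (n := 3) (by norm_num)
  rw [div_pow, ← Real.rpow_natCast ((7 : ℝ) ^ ((1 : ℝ) / 3)), ← Real.rpow_mul (by norm_num)] at this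
  norm_num at this ⊢
  exact this

/-- For fixed `p ∈ (0,1)` with `p > 1 − 1/∛7`, whp
`sat(G(n,p), C_4) ≤ (3(1+(1−p)³)/(2(1−(1−p)³)))·n·(1+o(1))`. -/
theorem c4_saturation_upper_large_p (p : ℝ) (hp0 : 0 < p) (hp1 : p < 1)
    (hp : 1 - 1 / (7 : ℝ) ^ ((1 : ℝ) / 3) < p) (ε : ℝ) (hε : 0 < ε) :
    Tendsto (fun n : ℕ =>
      erMeasure n p {ω |
        (satNum (graphOf ω) (cycGraph 4) : ℝ)
          ≤ (3 * (1 + (1 - p) ^ 3) / (2 * (1 - (1 - p) ^ 3))) * n * (1 + ε)})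
      atTop (nhds 1) := by
  have hQ := cube_lt hp1 hp
  have hδ : 0 < (1 - 7 * (1 - p) ^ 3) / 100 := by linarith
  obtain ⟨j, hj⟩ := exists_pow_lt_of_lt_one hδ (by linarith : 1 - p < 1)
  set η := min (ε / 2) (min (1 / 2) ((1 - 7 * (1 - p) ^ 3) / 100)) with hη
  have hη0 : 0 < η := lt_min (by linarith) (lt_min (by norm_num) hδ)
  have h1 : η ≤ ε / 2 := min_le_left _ _
  have h2 : η ≤ 1 / 2 := (min_le_right _ _).trans (min_le_left _ _)
  have h3 : η ≤ (1 - 7 * (1 - p) ^ 3) / 100 := (min_le_right _ _).trans (min_le_right _ _)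
  have hy : Tendsto (fun n : ℕ => (n : ℝ) ^ ((1 : ℝ) / 10)) atTop atTop :=
    (tendsto_rpow_atTop (by norm_num)).comp tendsto_natCast_atTop_atTop
  have hreal : Tendsto (fun n : ℕ => (erMeasure n p).real {ω |
        (satNum (graphOf ω) (cycGraph 4) : ℝ)
          ≤ (3 * (1 + (1 - p) ^ 3) / (2 * (1 - (1 - p) ^ 3))) * n * (1 + ε)})
      atTop (nhds 1) := by
    have hlow : Tendsto (fun n : ℕ => 1 - 2 * exp (-((n : ℝ) ^ ((1 : ℝ) / 10)))) atTop (nhds 1) := by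
      have h4 := (Real.tendsto_exp_neg_atTop_nhds_zero.comp hy).const_mul 2
      have h5 := h4.const_sub 1
      simpa using h5
    refine tendsto_of_tendsto_of_tendsto_of_le_of_le' hlow tendsto_const_nhds ?_
      (Eventually.of_forall fun n => measureReal_le_one)
    filter_upwards [hy.eventually_ge_atTop 2, hy.eventually_ge_atTop (8 / ε),
      hy.eventually_ge_atTop (2 * (24 + j) / η),
      hy.eventually_ge_atTop (2 * j / ((1 - η) * (p ^ 2 * (1 - p)) * (1 - p) ^ 3)),
      hy.eventually_ge_atTop (1 / ((1 - 7 * (1 - p) ^ 3) / 4 * (1 - p) ^ 3)),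
      hy.eventually_ge_atTop
        ((11 * (24 + j) + 1) / (η ^ 2 / 32 * (p ^ 3 * ((1 - p) ^ 3 * (1 - p) ^ j))))]
      with n g1 g2 g3 g4 g5 g6
    refine quant hp0 hp1 hQ hε hη0 h2 h1 h3 hj.le ?_ g1 g2 g3 g4 g5 g6
    rw [← Real.rpow_natCast, ← Real.rpow_mul (Nat.cast_nonneg n)]
    norm_num
  have h := ENNReal.tendsto_ofReal hreal
  rw [ENNReal.ofReal_one] at h
  refine h.congr fun n => ?_
  rw [ofReal_measureReal]
end

section
/- Let p ∈ (0,1) be fixed with p ≤ 1 − 1/∛7, and let s be the minimum positive integer such that (2s²+1)(1−p)^s < 1. Then with high probability sat(G(n,p), C_4) ≤ ((s+1)/2 + s(1−p)^s + s(1−p)^{2s}/(1−(1−p)^s))·n·(1+o(1)). -/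
open MeasureTheory Filter Real

lemma arith (p : ℝ) (hp0 : 0 < p) (hp1 : p < 1)
    (hp : p ≤ 1 - 1 / (7 : ℝ) ^ ((1 : ℝ) / 3)) (s : ℕ) (hs0 : 0 < s)
    (hs : (2 * (s : ℝ) ^ 2 + 1) * (1 - p) ^ s < 1) : 1 + 1 / p < ((s : ℝ) + 1) / 2 := by
  obtain ⟨q, hq⟩ : ∃ q, q = 1 - p := ⟨_, rfl⟩
  rw [← hq] at hs
  have hq0 : 0 < q := by linarith
  have hq1 : q < 1 := by linarith
  have hq3 : 1 / 7 ≤ q ^ 3 := by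
    have h7 : 0 < (7 : ℝ) ^ ((1 : ℝ) / 3) := by positivity
    have h : 1 / (7 : ℝ) ^ ((1 : ℝ) / 3) ≤ q := by linarith
    have h2 : (1 / (7 : ℝ) ^ ((1 : ℝ) / 3)) ^ 3 ≤ q ^ 3 := by gcongr
    have h3 : ((7 : ℝ) ^ ((1 : ℝ) / 3)) ^ 3 = 7 := by
      rw [← Real.rpow_natCast, ← Real.rpow_mul (by norm_num)]; norm_num
    rw [div_pow, h3] at h2
    simpa using h2
  have hqh : 1 / 2 ≤ q := by
    by_contra hlt
    push Not at hlt
    have : q ^ 3 < (1 / 2 : ℝ) ^ 3 := by gcongr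
    norm_num at this
    linarith
  have hs8 : 8 ≤ s := by
    by_contra hlt
    push Not at hlt
    have h2 : 1 / 4 ≤ q ^ 2 := by nlinarith
    have h4 : 1 / 14 ≤ q ^ 4 := by nlinarith [pow_succ q 3]
    have h5 : 1 / 28 ≤ q ^ 5 := by nlinarith [pow_succ q 4]
    have h6 : 1 / 49 ≤ q ^ 6 := by nlinarith [pow_mul q 3 2]
    have h7 : 1 / 98 ≤ q ^ 7 := by nlinarith [pow_succ q 6]
    interval_cases s <;> norm_num at hs <;> linarith
  have hs8' : (8 : ℝ) ≤ s := by exact_mod_cast hs8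
  by_contra hcon
  push Not at hcon
  have hp2 : p * (s - 1) ≤ 2 := by
    have : ((s : ℝ) - 1) ≤ 2 / p := by
      have : 2 / p = 2 * (1 / p) := by ring
      linarith
    rw [le_div_iff₀ hp0] at this
    linarith
  have hp27 : p ≤ 2 / 7 := by nlinarith
  have hlog : (s : ℝ) * Real.log q ≥ - 4 := by
    have h1 := Real.one_sub_inv_le_log_of_pos hq0
    have h2 : 1 - q⁻¹ = - (p / q) := by
      field_simp; linarith
    have h3 : (s : ℝ) * (p / q) ≤ 4 := by
      rw [← mul_div_assoc, div_le_iff₀ hq0]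
      nlinarith
    rw [h2] at h1
    nlinarith
  have hexp : Real.exp (-4) ≤ q ^ s := by
    rw [← Real.exp_log (pow_pos hq0 s), Real.log_pow]
    exact Real.exp_le_exp.mpr hlog
  have he4 : Real.exp 4 ≤ 81 := by
    have := Real.exp_one_lt_d9
    have h1 : Real.exp 4 = Real.exp 1 ^ 4 := by rw [← Real.exp_nat_mul]; norm_num
    have h3 : Real.exp 1 ≤ 3 := by linarith
    have : Real.exp 1 ^ 4 ≤ 3 ^ 4 := by gcongr
    rw [h1]; linarith
  rw [Real.exp_neg] at hexp
  have h81 : (1 : ℝ) / 81 ≤ q ^ s := by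
    refine le_trans ?_ hexp
    rw [one_div]
    exact inv_anti₀ (Real.exp_pos _) he4
  nlinarith

/-- pointwise combinatorial facts about C4 -/
lemma contains_c4 {V : Type*} (H : SimpleGraph V) (a b c d : V)
    (hab : H.Adj a b) (hbc : H.Adj b c) (hcd : H.Adj c d) (hda : H.Adj d a)
    (hac : a ≠ c) (hbd : b ≠ d) : ContainsCopy (cycGraph 4) H := by
  have e1 := hab.ne
  have e2 := hbc.ne
  have e3 := hcd.ne
  have e4 := hda.ne
  refine ⟨fun z : Fin 4 => ![a, b, c, d] z, ?_, ?_⟩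
  · intro (x : Fin 4) (y : Fin 4) h
    fin_cases x <;> fin_cases y <;> simp_all <;> rfl
  · intro (x : Fin 4) (y : Fin 4) h
    simp only [cycGraph, SimpleGraph.fromRel_adj] at h
    obtain ⟨h1, h2⟩ := h
    have h3 : x = y + 1 ∨ y = x + 1 := h2
    clear h2 h1
    have := hab.symm
    have := hbc.symm
    have := hcd.symm
    have := hda.symm
    revert h3
    fin_cases x <;> fin_cases y <;> simp <;> assumption

lemma c4_elim {V : Type*} (H : SimpleGraph V) (h : ContainsCopy (cycGraph 4) H) :
    ∃ a b c d : V, H.Adj a b ∧ H.Adj b c ∧ H.Adj c d ∧ H.Adj d a ∧ a ≠ c ∧ b ≠ d := by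
  obtain ⟨f, hf, h⟩ := h
  have key : ∀ x : ZMod 4, (cycGraph 4).Adj x (x + 1) := by
    intro x
    simp only [cycGraph, SimpleGraph.fromRel_adj]
    refine ⟨?_, by simp⟩
    revert x; decide
  refine ⟨f 0, f 1, f 2, f 3, h (key 0), h (key 1), h (key 2), h (key 3), ?_, ?_⟩
  · exact fun e => absurd (hf e) (by decide)
  · exact fun e => absurd (hf e) (by decide)

lemma satNum_le_s3 {V : Type*} [Finite V] (G S : SimpleGraph V) (hS : S ≤ G)
    (hfree : ¬ ContainsCopy (cycGraph 4) S) (N : ℕ)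
    (hN : ∀ H : SimpleGraph V, S ≤ H → H ≤ G → ¬ ContainsCopy (cycGraph 4) H →
      H.edgeSet.ncard ≤ N) : satNum G (cycGraph 4) ≤ N := by
  obtain ⟨H, hSH, hmax⟩ := (Set.toFinite
    {H : SimpleGraph V | H ≤ G ∧ ¬ ContainsCopy (cycGraph 4) H}).exists_le_maximal
    (a := S) ⟨hS, hfree⟩
  have hH := hmax.prop
  refine le_trans (Nat.sInf_le ⟨H, ⟨hH.1, hH.2, ?_⟩, rfl⟩) (hN H hSH hH.1 hH.2)
  intro v w hvw hn
  by_contra hc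
  have hle : H ⊔ SimpleGraph.fromEdgeSet {s(v, w)} ≤ G := by
    refine sup_le hH.1 ?_
    intro a b hab
    simp at hab
    rcases hab.1 with ⟨rfl, rfl⟩ | ⟨rfl, rfl⟩
    · exact hvw
    · exact hvw.symm
  have := hmax.le_of_ge (y := H ⊔ SimpleGraph.fromEdgeSet {s(v, w)}) ⟨hle, hc⟩ le_sup_left
  apply hn
  apply this
  right
  simp [hvw.ne]

lemma det {V : Type*} [Fintype V] [DecidableEq V] (G : SimpleGraph V) (K : ℕ)
    (c : ℕ → V) (T : V → ℕ)
    (hT : ∀ x, x ∉ (Finset.range K).image c → T x < K ∧ G.Adj x (c (T x))) :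
    satNum G (cycGraph 4) ≤ Fintype.card V
      + ∑ x ∈ Finset.univ \ (Finset.range K).image c, (T x + 1) + 2 * K ^ 2 := by
  classical
  set C := (Finset.range K).image c with hC
  have hcC : ∀ x, x ∉ C → c (T x) ∈ C := fun x hx =>
    Finset.mem_image_of_mem _ (Finset.mem_range.2 (hT x hx).1)
  let S : SimpleGraph V := SimpleGraph.fromRel (fun x y => x ∉ C ∧ y = c (T x))
  have hSu : ∀ x y, x ∉ C → S.Adj x y → y = c (T x) := by
    intro x y hx h
    simp only [S, SimpleGraph.fromRel_adj] at h
    rcases h.2 with h | h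
    · exact h.2
    · exact absurd (h.2 ▸ hcC y h.1) hx
  have hSe : ∀ x y, S.Adj x y → x ∉ C ∨ y ∉ C := by
    intro x y h
    simp only [S, SimpleGraph.fromRel_adj] at h
    tauto
  refine satNum_le_s3 G S ?_ ?_ _ ?_
  · intro x y h
    simp only [S, SimpleGraph.fromRel_adj] at h
    rcases h.2 with ⟨h, h'⟩ | ⟨h, h'⟩
    · exact h' ▸ (hT _ h).2
    · exact h' ▸ (hT _ h).2.symm
  · intro h
    obtain ⟨a, b, c', d, hab, hbc, hcd, hda, hac, hbd⟩ := c4_elim _ h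
    rcases hSe a b hab with h | h
    · exact hbd ((hSu a b h hab).trans (hSu a d h hda.symm).symm)
    · exact hac ((hSu b a h hab.symm).trans (hSu b c' h hbc).symm)
  · intro H hSH _ hfree
    have hadj : ∀ x, x ∉ C → H.Adj x (c (T x)) := by
      intro x hx
      apply hSH
      simp only [S, SimpleGraph.fromRel_adj]
      exact ⟨fun e => hx (e ▸ hcC x hx), Or.inl ⟨hx, by simp⟩⟩
    -- at most one neighbour in each class
    have huniq : ∀ v y z, y ∉ C → z ∉ C → T y = T z → v ≠ c (T y) →
        H.Adj v y → H.Adj v z → y = z := by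
      intro v y z hy hz hyz hv h1 h2
      by_contra hne
      exact hfree (contains_c4 H v y (c (T y)) z h1 (hadj y hy)
        (hyz ▸ (hadj z hz).symm) h2.symm hv hne)
    let A1 : Finset (V × V) := Finset.univ.image fun x => (c (T x), x)
    let A2 : Finset (V × V) := Finset.univ.filter fun e =>
      H.Adj e.1 e.2 ∧ e.1 ∉ C ∧ e.2 ∉ C ∧ T e.2 ≤ T e.1
    let A3 : Finset (V × V) := Finset.univ.filter fun e =>
      H.Adj e.1 e.2 ∧ e.1 ∈ C ∧ e.2 ∉ C ∧ e.1 ≠ c (T e.2)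
    let A4 : Finset (V × V) := C ×ˢ C
    have hCK : C.card ≤ K := by
      simpa using Finset.card_image_le (s := Finset.range K) (f := c)
    have h1 : A1.card ≤ Fintype.card V := Finset.card_image_le
    have h2 : A2.card ≤ ∑ x ∈ Finset.univ \ C, (T x + 1) := by
      have : ∑ x ∈ Finset.univ \ C, (T x + 1)
          = ((Finset.univ \ C).sigma fun x => Finset.range (T x + 1)).card := by
        simp [Finset.card_sigma]
      rw [this]
      refine Finset.card_le_card_of_injOn (fun e => ⟨e.1, T e.2⟩) ?_ ?_
      · intro e he
        simp [A2] at he ⊢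
        exact ⟨he.2.1, by omega⟩
      · rintro ⟨a, b⟩ he ⟨a', b'⟩ he' h
        simp [A2] at he he' h
        obtain ⟨rfl, h⟩ := h
        have := huniq a b b' he.2.2.1 he'.2.2.1 h
          (fun e => he.2.1 (e ▸ hcC b he.2.2.1)) he.1 he'.1
        rw [this]
    have h3 : A3.card ≤ K ^ 2 := by
      have : (C ×ˢ Finset.range K).card ≤ K ^ 2 := by
        rw [Finset.card_product, Finset.card_range, sq]
        exact Nat.mul_le_mul_right _ hCK
      refine le_trans ?_ this
      refine Finset.card_le_card_of_injOn (fun e => (e.1, T e.2)) ?_ ?_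
      · intro e he
        simp only [A3, Finset.coe_filter, Set.mem_ofPred_eq, Finset.mem_univ, true_and] at he
        simp only [Finset.coe_product, Set.mem_prod, Finset.mem_coe, Finset.mem_range]
        exact ⟨he.2.1, (hT _ he.2.2.1).1⟩
      · rintro ⟨a, b⟩ he ⟨a', b'⟩ he' h
        simp only [A3, Finset.coe_filter, Set.mem_ofPred_eq, Finset.mem_univ, true_and] at he he'
        simp only [Prod.mk.injEq] at h
        obtain ⟨rfl, h⟩ := h
        have := huniq a b b' he.2.2.1 he'.2.2.1 h he.2.2.2 he.1 he'.1
        rw [this]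
    have h4 : A4.card ≤ K ^ 2 := by
      rw [Finset.card_product, sq]
      exact Nat.mul_le_mul hCK hCK
    have hsub : H.edgeSet ⊆ ((A1 ∪ A2 ∪ (A3 ∪ A4)).image fun e => s(e.1, e.2) : Finset (Sym2 V)) := by
      have key : ∀ a b, H.Adj a b → (a, b) ∈ A1 ∪ A2 ∪ (A3 ∪ A4) ∨
          (b, a) ∈ A1 ∪ A2 ∪ (A3 ∪ A4) := by
        intro a b hab
        have hba := hab.symm
        simp only [Finset.mem_union, A1, A2, A3, A4, Finset.mem_filter, Finset.mem_univ,
          true_and, Finset.mem_product, Finset.mem_image, Prod.mk.injEq]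
        by_cases ha : a ∈ C <;> by_cases hb : b ∈ C
        · simp [ha, hb]
        · left
          by_cases h : a = c (T b)
          · exact Or.inl (Or.inl ⟨b, h.symm, rfl⟩)
          · exact Or.inr (Or.inl ⟨hab, ha, hb, h⟩)
        · right
          by_cases h : b = c (T a)
          · exact Or.inl (Or.inl ⟨a, h.symm, rfl⟩)
          · exact Or.inr (Or.inl ⟨hba, hb, ha, h⟩)
        · rcases le_total (T b) (T a) with h | h
          · exact Or.inl (Or.inl (Or.inr ⟨hab, ha, hb, h⟩))
          · exact Or.inr (Or.inl (Or.inr ⟨hba, hb, ha, h⟩))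
      intro e
      induction e with | _ a b
      intro he
      rw [SimpleGraph.mem_edgeSet] at he
      rw [Finset.mem_coe, Finset.mem_image]
      rcases key a b he with h | h
      · exact ⟨_, h, rfl⟩
      · exact ⟨_, h, Sym2.eq_swap⟩
    have := Set.ncard_le_ncard hsub (Finset.finite_toSet _)
    rw [Set.ncard_coe_finset] at this
    have i1 := Finset.card_image_le (s := A1 ∪ A2 ∪ (A3 ∪ A4)) (f := fun e => s(e.1, e.2))
    have i2 := Finset.card_union_le (A1 ∪ A2) (A3 ∪ A4)
    have i3 := Finset.card_union_le A1 A2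
    have i4 := Finset.card_union_le A3 A4
    omega

instance erProb (n : ℕ) (p : ℝ) : IsProbabilityMeasure (erMeasure n p) := by
  unfold erMeasure; infer_instance

lemma prob_false (n : ℕ) (p : ℝ) (hp0 : 0 < p) (hp1 : p < 1) (E : Finset (EdgeType n)) :
    erMeasure n p {ω | ∀ e ∈ E, ω e = false} = ENNReal.ofReal ((1 - p) ^ E.card) := by
  classical
  have h : {ω : EdgeType n → Bool | ∀ e ∈ E, ω e = false}
      = Set.pi Set.univ (fun e => if e ∈ E then {false} else Set.univ) := by
    ext ω
    simp only [Set.mem_ofPred_eq, Set.mem_pi, Set.mem_univ, true_implies]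
    refine forall_congr' fun e => ?_
    by_cases he : e ∈ E <;> simp [he]
  have hm : min p.toNNReal 1 = p.toNNReal := min_eq_left (Real.toNNReal_le_one.2 hp1.le)
  rw [h, erMeasure, Measure.pi_pi]
  have : ∀ e : EdgeType n, (PMF.bernoulli (min (Real.toNNReal p) 1) (min_le_right _ _)).toMeasure
      (if e ∈ E then {false} else Set.univ) = if e ∈ E then ENNReal.ofReal (1 - p) else 1 := by
    intro e
    by_cases he : e ∈ E
    · simp only [he, if_true]
      rw [PMF.toMeasure_apply_singleton _ _ (measurableSet_singleton _), PMF.bernoulli_apply]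
      simp only [cond_false, hm]
      rw [ENNReal.ofReal_sub _ hp0.le, ENNReal.ofReal_one, ENNReal.coe_sub]
      rfl
    · simp only [he, if_false]
      exact measure_univ
  rw [Finset.prod_congr rfl (fun e _ => this e), Finset.prod_ite_mem, Finset.univ_inter,
    Finset.prod_const, ENNReal.ofReal_pow (by linarith)]

open Classical in
/-- the edges from `x` to `c 0, …, c j`. -/
noncomputable def Eset {n : ℕ} (c : ℕ → Fin n) (x : Fin n) (j : ℕ) : Finset (EdgeType n) :=
  Finset.univ.filter fun e => ∃ i ∈ Finset.range (j + 1), s(x, c i) = e.1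

lemma Eset_card {n : ℕ} (c : ℕ → Fin n) (K : ℕ) (hc : Set.InjOn c (Finset.range K)) (x : Fin n)
    (hx : x ∉ (Finset.range K).image c) (j : ℕ) (hj : j < K) : (Eset c x j).card = j + 1 := by
  classical
  have hne : ∀ i, i < K → x ≠ c i := by
    intro i hi e
    exact hx (Finset.mem_image.2 ⟨i, Finset.mem_range.2 hi, e.symm⟩)
  have h : (Eset c x j).map ⟨Subtype.val, Subtype.val_injective⟩
      = (Finset.range (j + 1)).image (fun i => s(x, c i)) := by
    ext e
    simp only [Eset, Finset.mem_map, Finset.mem_filter, Finset.mem_univ, true_and,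
      Finset.mem_image, Function.Embedding.coeFn_mk]
    constructor
    · rintro ⟨a, ⟨i, hi, h⟩, rfl⟩
      exact ⟨i, hi, h⟩
    · rintro ⟨i, hi, rfl⟩
      refine ⟨⟨s(x, c i), ?_⟩, ⟨i, hi, rfl⟩, rfl⟩
      have := Finset.mem_range.1 hi
      simpa using hne i (by omega)
  rw [← Finset.card_map, h, Finset.card_image_of_injOn, Finset.card_range]
  intro a ha b hb hab
  simp only [Finset.coe_range, Set.mem_Iio] at ha hb
  have : c a = c b := by
    simp only [Sym2.eq_iff] at hab
    rcases hab with h | h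
    · exact h.2
    · exact absurd h.1 (hne b (by omega))
  exact hc (by simp; omega) (by simp; omega) this

open Classical in
/-- the index of the first neighbour of `x` among the `c i`. -/
noncomputable def Tn {n : ℕ} (c : ℕ → Fin n) (K : ℕ) (x : Fin n) (ω : EdgeType n → Bool) : ℕ :=
  ((Finset.range K).filter fun j => ∀ e ∈ Eset c x j, ω e = false).card

lemma Tn_le {n : ℕ} (c : ℕ → Fin n) (K : ℕ) (x : Fin n) (ω : EdgeType n → Bool) :
    Tn c K x ω ≤ K := by
  unfold Tn
  simpa using Finset.card_filter_le (Finset.range K) (fun j => ∀ e ∈ Eset c x j, ω e = false)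

lemma Tn_spec {n : ℕ} (c : ℕ → Fin n) (K : ℕ) (x : Fin n) (ω : EdgeType n → Bool)
    (hK : 0 < K) (h : ¬ ∀ e ∈ Eset c x (K - 1), ω e = false) :
    Tn c K x ω < K ∧ (graphOf ω).Adj x (c (Tn c K x ω)) := by
  classical
  have hex : ∃ i, i < K ∧ (graphOf ω).Adj x (c i) := by
    push Not at h
    obtain ⟨e, he, h⟩ := h
    simp only [Eset, Finset.mem_filter, Finset.mem_univ, true_and, Finset.mem_range] at he
    obtain ⟨i, hi, he⟩ := he
    refine ⟨i, by omega, ?_⟩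
    have hd := e.2
    rw [← he] at hd
    simp only [graphOf, SimpleGraph.fromEdgeSet_adj]
    refine ⟨⟨hd, ?_⟩, by simpa using hd⟩
    have : (⟨s(x, c i), hd⟩ : EdgeType n) = e := Subtype.ext he
    rw [this]; simpa using h
  have hm := Nat.find_spec hex
  have hmin := fun i => @Nat.find_min _ _ hex i
  have : Tn c K x ω = Nat.find hex := by
    generalize Nat.find hex = m at hm hmin
    have : (Finset.range K).filter (fun j => ∀ e ∈ Eset c x j, ω e = false) = Finset.range m := by
      ext j
      simp only [Finset.mem_filter, Finset.mem_range]
      constructor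
      · rintro ⟨hj, h⟩
        by_contra hjm
        have hadj := hm.2
        simp only [graphOf, SimpleGraph.fromEdgeSet_adj] at hadj
        obtain ⟨⟨hd, ht⟩, _⟩ := hadj
        have := h ⟨s(x, c m), hd⟩ (by
          simp only [Eset, Finset.mem_filter, Finset.mem_univ, true_and, Finset.mem_range]
          exact ⟨m, by omega, rfl⟩)
        rw [this] at ht
        exact absurd ht (by simp)
      · intro hj
        refine ⟨by omega, ?_⟩
        intro e he
        simp only [Eset, Finset.mem_filter, Finset.mem_univ, true_and, Finset.mem_range] at he
        obtain ⟨i, hi, he⟩ := he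
        by_contra hne
        apply hmin i (by omega)
        refine ⟨by omega, ?_⟩
        have hd := e.2
        rw [← he] at hd
        simp only [graphOf, SimpleGraph.fromEdgeSet_adj]
        refine ⟨⟨hd, ?_⟩, by simpa using hd⟩
        have : (⟨s(x, c i), hd⟩ : EdgeType n) = e := Subtype.ext he
        rw [this]; simpa using hne
    unfold Tn
    rw [this, Finset.card_range]
  rw [this]
  exact hm

lemma Tn_mean {n : ℕ} (p : ℝ) (hp0 : 0 < p) (hp1 : p < 1) (c : ℕ → Fin n) (K : ℕ)
    (hc : Set.InjOn c (Finset.range K)) (x : Fin n) (hx : x ∉ (Finset.range K).image c) :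
    ∫ ω, (Tn c K x ω : ℝ) ∂(erMeasure n p) ≤ 1 / p - 1 := by
  classical
  have h : ∀ ω, (Tn c K x ω : ℝ) = ∑ j ∈ Finset.range K,
      Set.indicator {ω : EdgeType n → Bool | ∀ e ∈ Eset c x j, ω e = false} (fun _ => (1 : ℝ)) ω := by
    intro ω
    unfold Tn
    rw [Finset.card_filter]
    push_cast
    refine Finset.sum_congr rfl fun j _ => ?_
    simp only [Set.indicator_apply, Set.mem_ofPred_eq]
  simp_rw [h]
  rw [integral_finsetSum _ (fun j _ => Integrable.of_finite)]
  have h2 : ∀ j ∈ Finset.range K, ∫ ω, Set.indicator {ω : EdgeType n → Bool |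
      ∀ e ∈ Eset c x j, ω e = false} (fun _ => (1 : ℝ)) ω ∂(erMeasure n p) = (1 - p) ^ (j + 1) := by
    intro j hj
    rw [integral_indicator_const _ (Set.toFinite _).measurableSet, measureReal_def,
      prob_false n p hp0 hp1, Eset_card c K hc x hx j (Finset.mem_range.1 hj),
      ENNReal.toReal_ofReal (by have : 0 < 1 - p := by linarith
                                positivity)]
    simp
  rw [Finset.sum_congr rfl h2]
  have h3 : ∀ K : ℕ, ∑ j ∈ Finset.range K, (1 - p) ^ (j + 1) = (1 - p - (1 - p) ^ (K + 1)) / p := by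
    intro K
    induction K with
    | zero => simp
    | succ k ih =>
      rw [Finset.sum_range_succ, ih]
      field_simp
      ring
  rw [h3]
  have : (0 : ℝ) ≤ (1 - p) ^ (K + 1) := pow_nonneg (by linarith) _
  rw [div_le_iff₀ hp0]
  field_simp
  linarith

open ProbabilityTheory in
lemma Tn_indep {n : ℕ} (p : ℝ) (c : ℕ → Fin n) (K : ℕ)
    (x y : Fin n) (hx : x ∉ (Finset.range K).image c) (hxy : x ≠ y) :
    IndepFun (fun ω => (Tn c K x ω : ℝ)) (fun ω => (Tn c K y ω : ℝ)) (erMeasure n p) := by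
  classical
  have hdisj : Disjoint (Eset c x (K - 1)) (Eset c y (K - 1)) ∨ K = 0 := by
    by_cases hK : K = 0
    · exact Or.inr hK
    left
    rw [Finset.disjoint_left]
    intro e he he'
    simp only [Eset, Finset.mem_filter, Finset.mem_univ, true_and, Finset.mem_range] at he he'
    obtain ⟨i, hi, he⟩ := he
    obtain ⟨i', hi', he'⟩ := he'
    rw [← he'] at he
    simp only [Sym2.eq_iff] at he
    rcases he with h | h
    · exact hxy h.1
    · exact hx (Finset.mem_image.2 ⟨i', Finset.mem_range.2 (by omega), h.1.symm⟩)
  rcases hdisj with hdisj | hK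
  swap
  · subst hK
    simp only [Tn, Finset.range_zero, Finset.filter_empty, Finset.card_empty]
    exact indepFun_const_left _ _
  have hi : iIndepFun (fun (e : EdgeType n) (ω : EdgeType n → Bool) => ω e) (erMeasure n p) :=
    iIndepFun_pi (X := fun _ b => b) (fun _ => aemeasurable_id)
  have h2 := hi.indepFun_finset _ _ hdisj (fun e => measurable_pi_apply e)
  let g : (z : Fin n) → ((Eset c z (K - 1)) → Bool) → ℝ := fun z w =>
    (((Finset.range K).filter fun j => ∀ e : Eset c z (K - 1), e.1 ∈ Eset c z j → w e = false).card : ℝ)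
  have hg : ∀ z, (fun ω => (Tn c K z ω : ℝ)) = g z ∘ (fun ω (e : Eset c z (K - 1)) => ω e) := by
    intro z
    funext ω
    simp only [g, Function.comp, Tn]
    congr 2
    refine Finset.filter_congr fun j hj => ?_
    constructor
    · intro h e he
      exact h _ he
    · intro h e he
      refine h ⟨e, ?_⟩ he
      simp only [Eset, Finset.mem_filter, Finset.mem_univ, true_and, Finset.mem_range] at he hj ⊢
      obtain ⟨i, hi, he⟩ := he
      exact ⟨i, by omega, he⟩
  rw [hg x, hg y]
  exact h2.comp (Measurable.of_discrete) (Measurable.of_discrete)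

open ProbabilityTheory in
lemma sum_dev {n : ℕ} (p : ℝ) (hp0 : 0 < p) (hp1 : p < 1) (c : ℕ → Fin n) (K : ℕ)
    (hc : Set.InjOn c (Finset.range K)) (δ : ℝ) (hδ : 0 < δ) (hn : 0 < n) :
    erMeasure n p {ω | (1 / p - 1 + δ) * n ≤
      ∑ x ∈ Finset.univ \ (Finset.range K).image c, (Tn c K x ω : ℝ)}
      ≤ ENNReal.ofReal ((K : ℝ) ^ 2 / (δ ^ 2 * n)) := by
  classical
  set D := Finset.univ \ (Finset.range K).image c with hD
  have hDn : (D.card : ℝ) ≤ n := by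
    have := Finset.card_le_univ D
    simp only [Fintype.card_fin] at this
    exact_mod_cast this
  have hn' : (0 : ℝ) < n := by exact_mod_cast hn
  have hmem : ∀ f : (EdgeType n → Bool) → ℝ, MemLp f 2 (erMeasure n p) := fun f => MemLp.of_discrete
  let X : Fin n → (EdgeType n → Bool) → ℝ := fun x ω => (Tn c K x ω : ℝ)
  have hvar : variance (∑ x ∈ D, X x) (erMeasure n p) ≤ n * (K : ℝ) ^ 2 := by
    rw [IndepFun.variance_sum (fun i _ => hmem _)]
    · calc ∑ x ∈ D, variance (X x) (erMeasure n p) ≤ ∑ x ∈ D, (K : ℝ) ^ 2 := by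
            refine Finset.sum_le_sum fun x _ => ?_
            have := variance_le_sq_of_bounded (μ := erMeasure n p) (X := X x) (a := 0) (b := K)
              (Filter.Eventually.of_forall fun ω => ⟨by simp [X], by
                simp only [X]; exact_mod_cast Tn_le c K x ω⟩)
              (Measurable.of_discrete).aemeasurable
            nlinarith [sq_nonneg (K : ℝ)]
        _ = D.card * (K : ℝ) ^ 2 := by simp
        _ ≤ _ := by gcongr
    · intro x hx y hy hxy
      refine Tn_indep p c K x y ?_ hxy
      simpa [hD] using hx
  have hmean : (∫ ω, (∑ x ∈ D, X x) ω ∂(erMeasure n p)) ≤ (1 / p - 1) * n := by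
    simp only [Finset.sum_apply]
    rw [integral_finsetSum _ (fun j _ => Integrable.of_finite)]
    have hpp : 0 ≤ 1 / p - 1 := by
      rw [sub_nonneg, le_div_iff₀ hp0]; linarith
    calc _ ≤ ∑ x ∈ D, (1 / p - 1) := by
          refine Finset.sum_le_sum fun x hx => ?_
          refine Tn_mean p hp0 hp1 c K hc x ?_
          simpa [hD] using hx
      _ = D.card * (1 / p - 1) := by rw [Finset.sum_const, nsmul_eq_mul]
      _ ≤ n * (1 / p - 1) := by gcongr
      _ = _ := by ring
  have hch := meas_ge_le_variance_div_sq (hmem (∑ x ∈ D, X x)) (c := δ * n) (by positivity)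
  refine le_trans (measure_mono ?_) (hch.trans (ENNReal.ofReal_le_ofReal ?_))
  · intro ω hω
    simp only [Set.mem_ofPred_eq] at hω ⊢
    refine le_trans ?_ (le_abs_self _)
    have : (∑ x ∈ D, X x) ω = ∑ x ∈ D, (Tn c K x ω : ℝ) := by simp [X]
    rw [this]
    linarith
  · calc _ ≤ n * (K : ℝ) ^ 2 / (δ * n) ^ 2 := by gcongr
      _ = _ := by field_simp

lemma empty_dev {n : ℕ} (p : ℝ) (hp0 : 0 < p) (hp1 : p < 1) (c : ℕ → Fin n) (K : ℕ) (hK : 0 < K)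
    (hc : Set.InjOn c (Finset.range K)) :
    erMeasure n p {ω | ∃ x ∉ (Finset.range K).image c, ∀ e ∈ Eset c x (K - 1), ω e = false}
      ≤ ENNReal.ofReal (n * (1 - p) ^ K) := by
  classical
  set D := Finset.univ \ (Finset.range K).image c with hD
  have : {ω : EdgeType n → Bool | ∃ x ∉ (Finset.range K).image c, ∀ e ∈ Eset c x (K - 1), ω e = false}
      ⊆ ⋃ x ∈ D, {ω | ∀ e ∈ Eset c x (K - 1), ω e = false} := by
    rintro ω ⟨x, hx, h⟩
    simp only [Set.mem_iUnion]
    exact ⟨x, by simpa [hD] using hx, h⟩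
  have hq : 0 < 1 - p := by linarith
  refine (measure_mono this).trans ((measure_biUnion_finset_le _ _).trans ?_)
  calc _ ≤ ∑ x ∈ D, ENNReal.ofReal ((1 - p) ^ K) := by
        refine Finset.sum_le_sum fun x hx => ?_
        rw [prob_false n p hp0 hp1, Eset_card c K hc x (by simpa [hD] using hx) _ (by omega),
          Nat.sub_add_cancel hK]
    _ = D.card * ENNReal.ofReal ((1 - p) ^ K) := by simp
    _ ≤ n * ENNReal.ofReal ((1 - p) ^ K) := by
        gcongr
        simpa using Finset.card_le_univ D
    _ = _ := by
        rw [ENNReal.ofReal_mul (by positivity), ENNReal.ofReal_natCast]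

lemma final_bound (p : ℝ) (hp0 : 0 < p) (hp1 : p < 1) (B δ : ℝ) (hδ : 0 < δ)
    (hB : 1 + 1 / p + 2 * δ ≤ B) (n K : ℕ) (hK : 0 < K) (hKn : K ^ 4 ≤ n) (hnK : n ≤ (K + 1) ^ 4)
    (hKδ : 2 ≤ δ * (K : ℝ) ^ 2) :
    1 - (ENNReal.ofReal (((K : ℝ) + 1) ^ 4 * (1 - p) ^ K)
      + ENNReal.ofReal (1 / δ ^ 2 * (1 / (K : ℝ) ^ 2)))
    ≤ erMeasure n p {ω | (satNum (graphOf ω) (cycGraph 4) : ℝ) ≤ B * n} := by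
  classical
  have hn : 0 < n := lt_of_lt_of_le (by positivity) hKn
  have hKn1 : K ≤ n := le_trans (Nat.le_self_pow (by norm_num) K) hKn
  let c : ℕ → Fin n := fun i => ⟨i % n, Nat.mod_lt _ hn⟩
  have hc : Set.InjOn c (Finset.range K) := by
    intro a ha b hb hab
    simp only [Finset.coe_range, Set.mem_Iio] at ha hb
    simp only [c, Fin.mk.injEq] at hab
    rwa [Nat.mod_eq_of_lt (by omega), Nat.mod_eq_of_lt (by omega)] at hab
  have hnR : (0 : ℝ) < n := by exact_mod_cast hn
  have hKR : (0 : ℝ) < K := by exact_mod_cast hK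
  have hKnR : (K : ℝ) ^ 4 ≤ n := by exact_mod_cast hKn
  have hnKR : (n : ℝ) ≤ ((K : ℝ) + 1) ^ 4 := by exact_mod_cast hnK
  have h1 := empty_dev p hp0 hp1 c K hK hc
  have h2 := sum_dev p hp0 hp1 c K hc δ hδ hn
  have hq : 0 < 1 - p := by linarith
  have h1' : ENNReal.ofReal (n * (1 - p) ^ K) ≤ ENNReal.ofReal (((K : ℝ) + 1) ^ 4 * (1 - p) ^ K) := by
    apply ENNReal.ofReal_le_ofReal
    gcongr
  have h2' : ENNReal.ofReal ((K : ℝ) ^ 2 / (δ ^ 2 * n)) ≤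
      ENNReal.ofReal (1 / δ ^ 2 * (1 / (K : ℝ) ^ 2)) := by
    apply ENNReal.ofReal_le_ofReal
    calc (K : ℝ) ^ 2 / (δ ^ 2 * n) ≤ (K : ℝ) ^ 2 / (δ ^ 2 * K ^ 4) := by gcongr
      _ = _ := by field_simp
  rw [tsub_le_iff_right]
  set g := {ω : EdgeType n → Bool | (satNum (graphOf ω) (cycGraph 4) : ℝ) ≤ B * n}
  set b1 := {ω : EdgeType n → Bool | ∃ x ∉ (Finset.range K).image c,
    ∀ e ∈ Eset c x (K - 1), ω e = false}
  set b2 := {ω : EdgeType n → Bool | (1 / p - 1 + δ) * n ≤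
      ∑ x ∈ Finset.univ \ (Finset.range K).image c, (Tn c K x ω : ℝ)}
  have hcov : (Set.univ : Set (EdgeType n → Bool)) ⊆ g ∪ (b1 ∪ b2) := by
    intro ω _
    by_cases hb1 : ω ∈ b1
    · exact Or.inr (Or.inl hb1)
    by_cases hb2 : ω ∈ b2
    · exact Or.inr (Or.inr hb2)
    left
    simp only [b1, Set.mem_ofPred_eq, not_exists, not_and] at hb1
    simp only [b2, Set.mem_ofPred_eq, not_le] at hb2
    have hd := det (graphOf ω) K c (fun x => Tn c K x ω)
      (fun x hx => Tn_spec c K x ω hK (hb1 x hx))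
    have hd' : (satNum (graphOf ω) (cycGraph 4) : ℝ) ≤ n
      + ∑ x ∈ Finset.univ \ (Finset.range K).image c, ((Tn c K x ω : ℝ) + 1) + 2 * (K : ℝ) ^ 2 := by
      rw [Fintype.card_fin] at hd
      exact_mod_cast hd
    rw [Finset.sum_add_distrib] at hd'
    have hcard : ∑ x ∈ Finset.univ \ (Finset.range K).image c, (1 : ℝ) ≤ n := by
      rw [Finset.sum_const, nsmul_eq_mul, mul_one]
      have := Finset.card_le_univ (Finset.univ \ (Finset.range K).image c)
      rw [Fintype.card_fin] at this
      exact_mod_cast this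
    have hK2 : 2 * (K : ℝ) ^ 2 ≤ δ * n := by
      have : (K : ℝ) ^ 4 = (K : ℝ) ^ 2 * (K : ℝ) ^ 2 := by ring
      have h0 : 0 < (K : ℝ) ^ 2 := by positivity
      nlinarith
    show (satNum (graphOf ω) (cycGraph 4) : ℝ) ≤ B * n
    have : (1 + 1 / p + 2 * δ) * n ≤ B * n := by gcongr
    linarith
  calc (1 : ENNReal) = erMeasure n p Set.univ := measure_univ.symm
    _ ≤ erMeasure n p (g ∪ (b1 ∪ b2)) := measure_mono hcov
    _ ≤ erMeasure n p g + (erMeasure n p b1 + erMeasure n p b2) :=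
        (measure_union_le _ _).trans (by gcongr; exact measure_union_le _ _)
    _ ≤ _ := by
        gcongr
        · exact h1.trans h1'
        · exact h2.trans h2'

/-- For fixed `p ∈ (0,1)` with `p ≤ 1 − 1/∛7`, and `s` the minimum
positive integer with `(2s²+1)(1−p)^s < 1`, whp
`sat(G(n,p), C_4) ≤ ((s+1)/2 + s(1−p)^s + s(1−p)^{2s}/(1−(1−p)^s))·n·(1+o(1))`. -/
theorem c4_saturation_upper_small_p (p : ℝ) (hp0 : 0 < p) (hp1 : p < 1)
    (hp : p ≤ 1 - 1 / (7 : ℝ) ^ ((1 : ℝ) / 3)) (s : ℕ) (hs0 : 0 < s)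
    (hs : (2 * (s : ℝ) ^ 2 + 1) * (1 - p) ^ s < 1)
    (hsmin : ∀ t : ℕ, 0 < t → (2 * (t : ℝ) ^ 2 + 1) * (1 - p) ^ t < 1 → s ≤ t)
    (ε : ℝ) (hε : 0 < ε) :
    Tendsto (fun n : ℕ =>
      erMeasure n p {ω |
        (satNum (graphOf ω) (cycGraph 4) : ℝ)
          ≤ (((s : ℝ) + 1) / 2 + s * (1 - p) ^ s
              + s * (1 - p) ^ (2 * s) / (1 - (1 - p) ^ s)) * n * (1 + ε)})
      atTop (nhds 1) := by
  have ha := arith p hp0 hp1 hp s hs0 hs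
  have hq : 0 < 1 - p := by linarith
  set A := (((s : ℝ) + 1) / 2 + s * (1 - p) ^ s
              + s * (1 - p) ^ (2 * s) / (1 - (1 - p) ^ s)) with hA
  obtain ⟨δ, hδdef⟩ : ∃ δ : ℝ, δ = (((s : ℝ) + 1) / 2 - (1 + 1 / p)) / 2 := ⟨_, rfl⟩
  have hδ : 0 < δ := by linarith
  have hsR : (0 : ℝ) < s := by exact_mod_cast hs0
  have hAge : ((s : ℝ) + 1) / 2 ≤ A := by
    have h1 : 0 ≤ (s : ℝ) * (1 - p) ^ s := by positivity
    have h2 : (1 - p) ^ s < 1 := pow_lt_one₀ hq.le (by linarith) hs0.ne'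
    have h3 : 0 ≤ (s : ℝ) * (1 - p) ^ (2 * s) / (1 - (1 - p) ^ s) :=
      div_nonneg (by positivity) (by linarith)
    linarith
  have hB : 1 + 1 / p + 2 * δ ≤ A * (1 + ε) := by nlinarith
  have hcomm : ∀ n : ℕ, A * n * (1 + ε) = A * (1 + ε) * n := fun n => by ring
  simp_rw [hcomm]
  have hKt : Tendsto (fun n : ℕ => Nat.sqrt (Nat.sqrt n)) atTop atTop := by
    refine tendsto_atTop.2 fun b => ?_
    filter_upwards [eventually_ge_atTop (b * b * (b * b))] with n hn
    exact Nat.le_sqrt.2 (Nat.le_sqrt.2 hn)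
  have hlim : Tendsto (fun k : ℕ => 1 - (ENNReal.ofReal (((k : ℝ) + 1) ^ 4 * (1 - p) ^ k)
      + ENNReal.ofReal (1 / δ ^ 2 * (1 / (k : ℝ) ^ 2)))) atTop (nhds 1) := by
    have l1 : Tendsto (fun k : ℕ => ((k : ℝ) + 1) ^ 4 * (1 - p) ^ k) atTop (nhds 0) := by
      have h := tendsto_pow_const_mul_const_pow_of_abs_lt_one 4 (r := 1 - p)
        (by rw [abs_of_pos hq]; linarith)
      have h' := (h.comp (tendsto_add_atTop_nat 1)).const_mul ((1 - p)⁻¹)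
      rw [mul_zero] at h'
      refine h'.congr fun k => ?_
      simp only [Function.comp]
      push_cast
      rw [pow_succ (1 - p) k]
      field_simp
    have l2 : Tendsto (fun k : ℕ => 1 / δ ^ 2 * (1 / (k : ℝ) ^ 2)) atTop (nhds 0) := by
      have h := (tendsto_one_div_atTop_nhds_zero_nat (𝕜 := ℝ)).pow 2
      have h' := h.const_mul (1 / δ ^ 2)
      simp only [one_div, inv_pow] at h' ⊢
      simpa using h'
    have l3 := (ENNReal.tendsto_ofReal l1).add (ENNReal.tendsto_ofReal l2)
    have l4 := ENNReal.Tendsto.sub (tendsto_const_nhds (x := (1 : ENNReal))) l3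
      (Or.inl ENNReal.one_ne_top)
    simpa using l4
  refine tendsto_of_tendsto_of_tendsto_of_le_of_le' (hlim.comp hKt) tendsto_const_nhds ?_
    (Eventually.of_forall fun n => prob_le_one)
  have hev : ∀ᶠ k : ℕ in atTop, 0 < k ∧ 2 ≤ δ * (k : ℝ) ^ 2 := by
    refine (eventually_gt_atTop 0).and ?_
    have : Tendsto (fun k : ℕ => δ * (k : ℝ) ^ 2) atTop atTop :=
      ((tendsto_pow_atTop two_ne_zero).comp tendsto_natCast_atTop_atTop).const_mul_atTop hδ
    exact this.eventually_ge_atTop 2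
  filter_upwards [hKt.eventually hev] with n hn
  refine final_bound p hp0 hp1 _ δ hδ hB n _ hn.1 ?_ ?_ hn.2
  · have h1 := Nat.sqrt_le' (Nat.sqrt n)
    have h2 := Nat.sqrt_le' n
    calc (Nat.sqrt (Nat.sqrt n)) ^ 4 = ((Nat.sqrt (Nat.sqrt n)) ^ 2) ^ 2 := by ring
      _ ≤ (Nat.sqrt n) ^ 2 := Nat.pow_le_pow_left h1 2
      _ ≤ n := h2
  · have h1 := Nat.succ_le_succ_sqrt' (Nat.sqrt n)
    have h2 := Nat.succ_le_succ_sqrt' n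
    calc n ≤ (Nat.sqrt n + 1) ^ 2 := by
          omega
      _ ≤ ((Nat.sqrt (Nat.sqrt n) + 1) ^ 2) ^ 2 := Nat.pow_le_pow_left h1 2
      _ = _ := by ring
end
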